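/- There exists a constant C > 0 such that for every x in the closed positive Weyl chamber ā₊, | (ρ, x) + (x, ∇F_0(x))/F_0(x) − |R₀⁺| | ≤ C / (1 + min_{α∈R⁺} (α, x)), where |R₀⁺| is the number of positive indivisible roots. -/

import Mathlib

open scoped BigOperators RealInnerProductSpace Classical

noncomputable section

variable {E : Type*} [NormedAddCommGroup E] [InnerProductSpace ℝ E] [FiniteDimensional ℝ E]

/-- The coroot `α∨ = 2α/|α|²`. -/
def coroot (α : E) : E := (2 / ⟪α, α⟫) • α

/-- The orthogonal reflection `r_α x = x - (α∨, x) α`. -/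
def rRefl (α : E) (x : E) : E := x - ⟪coroot α, x⟫ • α

/-- Data of an integral root system with positive subsystem and
a Weyl-invariant positive multiplicity function. -/
structure HOData (E : Type*) [NormedAddCommGroup E] [InnerProductSpace ℝ E] : Type _ where
  R : Finset E
  Rpos : Finset E
  k : E → ℝ
  k_pos : ∀ α ∈ R, 0 < k α
  root_ne_zero : ∀ α ∈ R, α ≠ 0
  pos_subset : Rpos ⊆ R
  pos_char : ∃ u : E, ∀ α ∈ R, (α ∈ Rpos ↔ 0 < ⟪α, u⟫)
  pos_or_neg : ∀ α ∈ R, α ∈ Rpos ∨ -α ∈ Rpos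
  neg_mem : ∀ α ∈ R, -α ∈ R
  integral : ∀ α ∈ R, ∀ β ∈ R, ∃ n : ℤ, ⟪coroot α, β⟫ = (n : ℝ)
  refl_mem : ∀ α ∈ R, ∀ β ∈ R, rRefl α β ∈ R
  k_inv : ∀ α ∈ R, ∀ β ∈ R, k (rRefl α β) = k β

/-- The Weyl group: the subgroup of linear isometries generated by the root reflections. -/
def weylGroup (D : HOData E) : Subgroup (E ≃ₗᵢ[ℝ] E) :=
  Subgroup.closure {w : E ≃ₗᵢ[ℝ] E | ∃ α ∈ D.R, ∀ x, w x = rRefl α x}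

/-- `ρ = (1/2) Σ_{α ∈ R⁺} k_α α`. -/
def rhoHO (D : HOData E) : E := (2:ℝ)⁻¹ • ∑ α ∈ D.Rpos, D.k α • α

/-- Regular points. -/
def HORegular (D : HOData E) (x : E) : Prop := ∀ α ∈ D.R, ⟪α, x⟫ ≠ 0

/-- The (open) positive Weyl chamber. -/
def posChamber (D : HOData E) : Set E := {x | ∀ α ∈ D.Rpos, 0 < ⟪α, x⟫}

/-- The positive indivisible roots `R₀⁺`. -/
def Rpos0 (D : HOData E) : Finset E := D.Rpos.filter (fun α => (2:ℝ)⁻¹ • α ∉ D.R)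

/-- The Opdam function `G_λ` for a real parameter `λ`: an analytic function,
normalized at `0`, satisfying the Cherednik differential-difference system. -/
def IsOpdamR (D : HOData E) (lam : E) (G : E → ℝ) : Prop :=
  AnalyticOnNhd ℝ G Set.univ ∧ G 0 = 1 ∧
  ∀ ξ x, HORegular D x →
    fderiv ℝ G x ξ =
      (∑ α ∈ D.Rpos, D.k α * ⟪α, ξ⟫ / (1 - Real.exp (-⟪α, x⟫)) * (G (rRefl α x) - G x))
      + ⟪rhoHO D + lam, ξ⟫ * G x

/-- The Opdam function `G_λ` for a complex parameter `λ = l1 + i l2 ∈ h`. -/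
def IsOpdamC (D : HOData E) (l1 l2 : E) (G : E → ℂ) : Prop :=
  AnalyticOnNhd ℝ G Set.univ ∧ G 0 = 1 ∧
  ∀ ξ x, HORegular D x →
    fderiv ℝ G x ξ =
      (∑ α ∈ D.Rpos, ((D.k α * ⟪α, ξ⟫ / (1 - Real.exp (-⟪α, x⟫)) : ℝ) : ℂ)
          * (G (rRefl α x) - G x))
      + (((⟪rhoHO D + l1, ξ⟫ : ℝ) : ℂ) + Complex.I * ((⟪l2, ξ⟫ : ℝ) : ℂ)) * G x

/-- The symmetrization `F(x) = |W|⁻¹ Σ_{w ∈ W} G(w x)` (real valued case). -/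
def Fsym (D : HOData E) [Fintype (weylGroup D)] (G : E → ℝ) (x : E) : ℝ :=
  (Fintype.card (weylGroup D) : ℝ)⁻¹ * ∑ w : weylGroup D, G (w.1 x)

/-- The symmetrization `F(x) = |W|⁻¹ Σ_{w ∈ W} G(w x)` (complex valued case). -/
def FsymC (D : HOData E) [Fintype (weylGroup D)] (G : E → ℂ) (x : E) : ℂ :=
  (Fintype.card (weylGroup D) : ℂ)⁻¹ * ∑ w : weylGroup D, G (w.1 x)

/-- `max_{w ∈ W} (w λ, x)`. -/
def maxW (D : HOData E) [Fintype (weylGroup D)] (lam x : E) : ℝ :=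
  ⨆ w : weylGroup D, ⟪w.1 lam, x⟫

/-!
Let `θ_A(z) = ∏_{β ∈ R₀⁺} (1 + A (β, z)⁺)` and let `f(z) = e^{|ρ|(z)} G(z)`, where
`|ρ|(z) = ½ ∑_{α > 0} k_α |(α, z)|`. On regular points the Cherednik system says that the radial
derivative of `f` equals `L f`, where
`L f(z) = ∑_{α > 0} k_α [(α, z)⁺ f(r_α z) + b(|(α, z)|) (f(r_α z) - f(z))]` and
`b(s) = s / (e^s - 1)`. On each Weyl orbit of rays this is a cooperative linear system, so it obeys
a comparison principle, and suitable perturbations of `θ_A` are supersolutions for large `A` and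
subsolutions for small `A`. Hence `f` is comparable to `θ_1`.

Suppose that all roots have absolute value at least `m` at `z`, and let `n` be the number of
positive indivisible roots that are positive at `z`. A reflection in a root that is positive at `z`
either lowers `n` by exactly one, or makes `(α, z) θ_1(r_α z)` smaller than `θ_1(z)` by a factor
`1 / m`. By induction on `n`, integrating along the ray in each step, `L f = n f + O(θ_1 / m)`
at `z`.

Finally, sum over the Weyl orbit of a point `x` of the positive chamber. The terms with
`n < |R₀⁺|` are smaller than the total by a factor `1 / m`, `∑_w f(w x) = |W| e^{(ρ, x)} F(x)`, and
taking radial derivatives turns the right hand side into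
`|W| e^{(ρ, x)} ((ρ, x) F(x) + (x, ∇F(x)))`. The closed chamber is reached by continuity.
-/

variable {V : Type*} [NormedAddCommGroup V] [InnerProductSpace ℝ V]

/-! ### Reflections and positive roots -/

lemma rRefl_eq_reflection (α z : V) : rRefl α z = (ℝ ∙ α)ᗮ.reflection z := by
  rw [Submodule.reflection_orthogonal_apply, Submodule.reflection_singleton_apply, rRefl, coroot,
    inner_smul_left, real_inner_self_eq_norm_sq]
  simp only [RCLike.conj_to_real, RCLike.ofReal_real_eq_id, id_eq, neg_sub, two_smul, ← add_smul]
  congr 2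
  ring

lemma rRefl_self (α : V) : rRefl α α = -α := by
  rw [rRefl_eq_reflection, Submodule.reflection_orthogonalComplement_singleton_eq_neg]

lemma rRefl_rRefl (α z : V) : rRefl α (rRefl α z) = z := by
  simp only [rRefl_eq_reflection, Submodule.reflection_reflection]

lemma rRefl_smul (α z : V) (c : ℝ) : rRefl α (c • z) = c • rRefl α z := by
  simp only [rRefl_eq_reflection, map_smul]

lemma rRefl_neg (α z : V) : rRefl α (-z) = -rRefl α z := by
  simp only [rRefl_eq_reflection, map_neg]

lemma inner_rRefl (α β z : V) : ⟪β, rRefl α z⟫ = ⟪rRefl α β, z⟫ := by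
  rw [← LinearIsometryEquiv.inner_map_map (ℝ ∙ α)ᗮ.reflection β]
  simp only [← rRefl_eq_reflection, rRefl_rRefl]

lemma inner_coroot (α β : V) : ⟪coroot α, β⟫ = 2 * ⟪α, β⟫ / ⟪α, α⟫ := by
  rw [coroot, real_inner_smul_left]
  ring

lemma inner_coroot_mul_inner_coroot_lt_four {α β : V} (hα : α ≠ 0) (hβ : ∀ c : ℝ, β ≠ c • α)
    (hpos : 0 < ⟪α, β⟫) : ⟪coroot α, β⟫ * ⟪coroot β, α⟫ < 4 := by
  have hβ0 : β ≠ 0 := by simpa using hβ 0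
  have hα2 : 0 < ⟪α, α⟫ := real_inner_self_pos.2 hα
  have hβ2 : 0 < ⟪β, β⟫ := real_inner_self_pos.2 hβ0
  have cauchy_schwarz : ⟪α, β⟫ < ‖α‖ * ‖β‖ := by
    refine lt_of_le_of_ne (real_inner_le_norm α β) fun h => ?_
    obtain ⟨c, -, hc⟩ := ((norm_inner_eq_norm_iff (𝕜 := ℝ) hα hβ0).1
      (by rw [Real.norm_of_nonneg hpos.le, h]))
    exact hβ c hc
  rw [inner_coroot, inner_coroot, real_inner_comm α β, div_mul_div_comm,
    div_lt_iff₀ (by positivity), real_inner_self_eq_norm_mul_norm, real_inner_self_eq_norm_mul_norm]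
  nlinarith

namespace HOData

variable (D : HOData V)

lemma exists_height : ∃ u : V, ∀ α ∈ D.Rpos, 0 < ⟪α, u⟫ := by
  obtain ⟨u, hu⟩ := D.pos_char
  exact ⟨u, fun α h => (hu α (D.pos_subset h)).1 h⟩

lemma neg_notMem_pos {α : V} (h : α ∈ D.Rpos) : -α ∉ D.Rpos := by
  obtain ⟨u, hu⟩ := D.exists_height
  intro h'
  have := hu _ h'
  rw [inner_neg_left] at this
  linarith [hu _ h]

lemma neg_mem_pos {α : V} (h : α ∈ D.R) (h' : α ∉ D.Rpos) : -α ∈ D.Rpos :=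
  (D.pos_or_neg α h).resolve_left h'

lemma ne_zero_of_pos {α : V} (h : α ∈ D.Rpos) : α ≠ 0 := D.root_ne_zero α (D.pos_subset h)

lemma smul_mem_pos {α : V} {c : ℝ} (hc : 0 < c) (h : α ∈ D.Rpos) (h' : c • α ∈ D.R) :
    c • α ∈ D.Rpos := by
  obtain ⟨u, hu⟩ := D.pos_char
  rw [hu _ h', real_inner_smul_left]
  exact mul_pos hc ((hu α (D.pos_subset h)).1 h)

lemma k_neg {α : V} (h : α ∈ D.R) : D.k (-α) = D.k α := by
  rw [← rRefl_self α, D.k_inv α h α h]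

lemma sum_eq_two_mul_sum_pos {f : V → ℝ} (hf : ∀ α ∈ D.R, f (-α) = f α) :
    ∑ α ∈ D.R, f α = 2 * ∑ α ∈ D.Rpos, f α := by
  rw [← Finset.sum_sdiff D.pos_subset, two_mul]
  congr 1
  refine Finset.sum_nbij' (fun α => -α) (fun α => -α) (fun α h => ?_) (fun α h => ?_)
    (fun α _ => neg_neg α) (fun α _ => neg_neg α)
    (fun α h => (hf α (Finset.mem_sdiff.1 h).1).symm)
  · exact D.neg_mem_pos (Finset.mem_sdiff.1 h).1 (Finset.mem_sdiff.1 h).2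
  · exact Finset.mem_sdiff.2 ⟨D.neg_mem _ (D.pos_subset h), D.neg_notMem_pos h⟩

lemma sum_rRefl {α : V} (hα : α ∈ D.R) (f : V → ℝ) :
    ∑ γ ∈ D.R, f (rRefl α γ) = ∑ γ ∈ D.R, f γ :=
  Finset.sum_nbij' (rRefl α) (rRefl α) (D.refl_mem α hα) (D.refl_mem α hα)
    (fun γ _ => rRefl_rRefl α γ) (fun γ _ => rRefl_rRefl α γ) (fun _ _ => rfl)

lemma regular_rRefl {α z : V} (hα : α ∈ D.R) (hz : HORegular D z) :
    HORegular D (rRefl α z) := by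
  intro γ hγ
  rw [inner_rRefl]
  exact hz _ (D.refl_mem α hα γ hγ)

lemma regular_smul {z : V} {t : ℝ} (ht : t ≠ 0) (hz : HORegular D z) :
    HORegular D (t • z) := by
  intro γ hγ
  rw [real_inner_smul_right]
  exact mul_ne_zero ht (hz γ hγ)

lemma mem_Rpos0 {β : V} : β ∈ Rpos0 D ↔ β ∈ D.Rpos ∧ (2 : ℝ)⁻¹ • β ∉ D.R := by
  simp only [Rpos0, Finset.mem_filter]

lemma pos_of_mem_Rpos0 {β : V} (h : β ∈ Rpos0 D) : β ∈ D.Rpos := (D.mem_Rpos0.1 h).1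

lemma eq_inv_two_or_one_or_two_of_smul_mem {α : V} {c : ℝ} (hc : 0 < c) (hα : α ∈ D.R)
    (hcα : c • α ∈ D.R) : c = 2⁻¹ ∨ c = 1 ∨ c = 2 := by
  obtain ⟨n, hn⟩ := D.integral α hα _ hcα
  obtain ⟨m, hm⟩ := D.integral _ hcα α hα
  have hα2 : ⟪α, α⟫ ≠ 0 := inner_self_ne_zero.2 (D.root_ne_zero α hα)
  have hn' : (n : ℝ) = 2 * c := by
    rw [← hn, inner_coroot, real_inner_smul_right]
    field_simp
  have hm' : (m : ℝ) = 2 / c := by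
    rw [← hm, inner_coroot, real_inner_smul_left, real_inner_smul_left, real_inner_smul_right]
    field_simp
  have hnm : n * m = 4 := by
    have : (n : ℝ) * m = 4 := by rw [hn', hm']; field_simp; norm_num
    exact_mod_cast this
  have hn0 : 0 < n := by
    have : (0 : ℝ) < n := by rw [hn']; positivity
    exact_mod_cast this
  have hn4 : n ≤ 4 := Int.le_of_dvd (by norm_num) ⟨m, hnm.symm⟩
  interval_cases n
  · left; norm_num at hn' ⊢; linarith
  · right; left; norm_num at hn'; linarith
  · omega
  · right; right; norm_num at hn'; linarith

lemma exists_indivisible {α : V} (h : α ∈ D.Rpos) :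
    ∃ β ∈ Rpos0 D, rRefl α β = -β ∧ ∀ z, 0 < ⟪α, z⟫ → ⟪α, z⟫ ≤ 2 * ⟪β, z⟫ := by
  by_cases h2 : (2 : ℝ)⁻¹ • α ∈ D.R
  · refine ⟨(2 : ℝ)⁻¹ • α, D.mem_Rpos0.2 ⟨D.smul_mem_pos (by norm_num) h h2, fun h4 => ?_⟩,
      by rw [rRefl_smul, rRefl_self, smul_neg], fun z _ => ?_⟩
    · rw [smul_smul] at h4
      rcases D.eq_inv_two_or_one_or_two_of_smul_mem (by norm_num) (D.pos_subset h) h4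
        with hc | hc | hc <;> norm_num at hc
    · rw [real_inner_smul_left, mul_inv_cancel_left₀ two_ne_zero]
  · exact ⟨α, D.mem_Rpos0.2 ⟨h, h2⟩, rRefl_self α, fun z hz => by linarith⟩

lemma eq_of_proportional {α β : V} (hα : α ∈ Rpos0 D) (hβ : β ∈ Rpos0 D) {c : ℝ}
    (h : β = c • α) : β = α := by
  obtain ⟨hα1, hα2⟩ := D.mem_Rpos0.1 hα
  obtain ⟨hβ1, hβ2⟩ := D.mem_Rpos0.1 hβ
  obtain ⟨u, hu⟩ := D.exists_height
  subst h
  have hc : 0 < c := by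
    have := hu _ hβ1
    rw [real_inner_smul_left] at this
    exact pos_of_mul_pos_left this (hu α hα1).le
  rcases D.eq_inv_two_or_one_or_two_of_smul_mem hc (D.pos_subset hα1) (D.pos_subset hβ1)
    with rfl | rfl | rfl
  · exact absurd (D.pos_subset hβ1) hα2
  · exact one_smul ℝ α
  · rw [inv_smul_smul₀ two_ne_zero] at hβ2
    exact absurd (D.pos_subset hα1) hβ2

lemma sub_mem {α β : V} (hα : α ∈ D.R) (hβ : β ∈ D.R) (hpos : 0 < ⟪α, β⟫)
    (hprop : ∀ c : ℝ, β ≠ c • α) : β - α ∈ D.R := by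
  obtain ⟨n, hn⟩ := D.integral α hα β hβ
  obtain ⟨m, hm⟩ := D.integral β hβ α hα
  have hα2 : 0 < ⟪α, α⟫ := real_inner_self_pos.2 (D.root_ne_zero α hα)
  have hβ2 : 0 < ⟪β, β⟫ := real_inner_self_pos.2 (D.root_ne_zero β hβ)
  have hnm : n * m < 4 := by
    have := inner_coroot_mul_inner_coroot_lt_four (D.root_ne_zero α hα) hprop hpos
    rw [hn, hm] at this
    exact_mod_cast this
  have hn0 : 0 < n := by
    have : (0 : ℝ) < n := by rw [← hn, inner_coroot]; positivity
    exact_mod_cast this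
  have hm0 : 0 < m := by
    have : (0 : ℝ) < m := by rw [← hm, inner_coroot, real_inner_comm]; positivity
    exact_mod_cast this
  obtain rfl | rfl : n = 1 ∨ m = 1 := by
    by_contra! h
    nlinarith [show 2 ≤ n by omega, show 2 ≤ m by omega]
  · simpa only [rRefl, hn, Int.cast_one, one_smul] using D.refl_mem α hα β hβ
  · simpa only [rRefl, hm, Int.cast_one, one_smul, neg_sub] using
      D.neg_mem _ (D.refl_mem β hβ α hα)

/-- A positive root is indecomposable (that is, simple) if it is not the sum of two positive
roots. -/
def Indecomposable (α : V) : Prop :=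
  α ∈ D.Rpos ∧ ∀ β ∈ D.Rpos, ∀ δ ∈ D.Rpos, β + δ ≠ α

variable {D}

lemma Indecomposable.mem_Rpos0 {α : V} (h : D.Indecomposable α) : α ∈ Rpos0 D := by
  refine D.mem_Rpos0.2 ⟨h.1, fun h2 => ?_⟩
  have hpos := D.smul_mem_pos (by norm_num) h.1 h2
  refine h.2 _ hpos _ hpos ?_
  rw [← two_smul ℝ, smul_inv_smul₀ two_ne_zero]

lemma Indecomposable.add_ne_smul {α : V} (h : D.Indecomposable α) (n : ℕ) {β δ : V}
    (hβ : β ∈ D.Rpos) (hδ : δ ∈ D.Rpos) (hprop : ∀ c : ℝ, β ≠ c • α) :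
    β + δ ≠ (n : ℝ) • α := by
  induction n generalizing β δ with
  | zero =>
    intro he
    rw [Nat.cast_zero, zero_smul] at he
    exact D.neg_notMem_pos hβ (eq_neg_of_add_eq_zero_right he ▸ hδ)
  | succ n ih =>
    have of_inner_pos {β δ : V} (hβ : β ∈ D.Rpos) (hδ : δ ∈ D.Rpos)
        (hprop : ∀ c : ℝ, β ≠ c • α) (hpos : 0 < ⟪α, β⟫) :
        β + δ ≠ ((n + 1 : ℕ) : ℝ) • α := by
      intro he
      have hsub := D.sub_mem (D.pos_subset h.1) (D.pos_subset hβ) hpos hprop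
      by_cases hp : β - α ∈ D.Rpos
      · refine ih hp hδ (fun c hc => hprop (c + 1) ?_) ?_
        · rw [add_smul, one_smul, ← hc, sub_add_cancel]
        · rw [sub_add_eq_add_sub, he, Nat.cast_succ, add_smul, one_smul, add_sub_cancel_right]
      · exact h.2 β hβ _ (D.neg_mem_pos hsub hp) (by abel)
    intro he
    have hsum : 0 < ⟪α, β⟫ + ⟪α, δ⟫ := by
      rw [← inner_add_right, he, real_inner_smul_right]
      have := real_inner_self_pos.2 (D.ne_zero_of_pos h.1)
      positivity
    rcases lt_or_ge 0 ⟪α, β⟫ with hαβ | hαβ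
    · exact of_inner_pos hβ hδ hprop hαβ he
    · refine of_inner_pos hδ hβ (fun c hc => hprop ((n + 1 : ℕ) - c) ?_) (by linarith)
        (by rwa [add_comm])
      rw [sub_smul, ← hc, ← he, add_sub_cancel_right]

lemma Indecomposable.rRefl_mem_pos {α β : V} (h : D.Indecomposable α) (hβ : β ∈ Rpos0 D)
    (hne : β ≠ α) : rRefl α β ∈ D.Rpos := by
  by_contra hc
  have hβ1 := D.pos_of_mem_Rpos0 hβ
  have hαR := D.pos_subset h.1
  have hδ := D.neg_mem_pos (D.refl_mem α hαR β (D.pos_subset hβ1)) hc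
  obtain ⟨n, hn⟩ := D.integral α hαR β (D.pos_subset hβ1)
  have he : β + -rRefl α β = (n : ℝ) • α := by
    rw [rRefl, hn, neg_sub, add_sub_cancel]
  have hn0 : 0 ≤ n := by
    obtain ⟨u, hu⟩ := D.exists_height
    have h1 : 0 < ⟪(n : ℝ) • α, u⟫ := by
      rw [← he, inner_add_left]
      exact add_pos (hu β hβ1) (hu _ hδ)
    rw [real_inner_smul_left] at h1
    exact_mod_cast (pos_of_mul_pos_left h1 (hu α h.1).le).le
  lift n to ℕ using hn0
  exact h.add_ne_smul n hβ1 hδ (fun c hc => hne (D.eq_of_proportional h.mem_Rpos0 hβ hc))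
    (by simpa only [Int.cast_natCast] using he)

variable (D)

lemma mem_closure_indecomposable {β : V} (hβ : β ∈ D.Rpos) :
    β ∈ AddSubmonoid.closure {α | D.Indecomposable α} := by
  obtain ⟨u, hu⟩ := D.exists_height
  by_contra hβ'
  obtain ⟨γ, hγ, hmin⟩ := (D.Rpos.filter
    (· ∉ AddSubmonoid.closure {α | D.Indecomposable α})).exists_min_image (⟪·, u⟫)
    ⟨β, Finset.mem_filter.2 ⟨hβ, hβ'⟩⟩
  rw [Finset.mem_filter] at hγ
  have mem_of_lt {δ : V} (hδ : δ ∈ D.Rpos) (hlt : ⟪δ, u⟫ < ⟪γ, u⟫) :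
      δ ∈ AddSubmonoid.closure {α | D.Indecomposable α} := by
    by_contra hδ'
    exact hlt.not_ge (hmin δ (Finset.mem_filter.2 ⟨hδ, hδ'⟩))
  have hdec : ¬ D.Indecomposable γ := fun h => hγ.2 (AddSubmonoid.subset_closure h)
  simp only [Indecomposable, not_and, not_forall, not_not] at hdec
  obtain ⟨δ, hδ, ε, hε, rfl⟩ := hdec hγ.1
  refine hγ.2 (add_mem (mem_of_lt hδ ?_) (mem_of_lt hε ?_)) <;> rw [inner_add_left]
  · linarith [hu ε hε]
  · linarith [hu δ hδ]

lemma exists_indecomposable_max {z β : V} (hβ : β ∈ D.Rpos) (hβz : 0 < ⟪β, z⟫) :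
    ∃ α, D.Indecomposable α ∧ 0 < ⟪α, z⟫ ∧ ∀ γ, D.Indecomposable γ → ⟪γ, z⟫ ≤ ⟪α, z⟫ := by
  have hex : ∃ γ, D.Indecomposable γ ∧ 0 < ⟪γ, z⟫ := by
    by_contra! hle
    refine hβz.not_ge (AddSubmonoid.closure_induction (motive := fun γ _ => ⟪γ, z⟫ ≤ 0) hle
      (inner_zero_left z).le (fun γ δ _ _ hγ hδ => ?_) (D.mem_closure_indecomposable hβ))
    rw [inner_add_left]
    exact add_nonpos hγ hδ
  obtain ⟨γ, hγ, hγz⟩ := hex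
  obtain ⟨α, hα, hmax⟩ := (D.Rpos.filter D.Indecomposable).exists_max_image (⟪·, z⟫)
    ⟨γ, Finset.mem_filter.2 ⟨hγ.1, hγ⟩⟩
  have hmax' (δ : V) (hδ : D.Indecomposable δ) : ⟪δ, z⟫ ≤ ⟪α, z⟫ :=
    hmax δ (Finset.mem_filter.2 ⟨hδ.1, hδ⟩)
  exact ⟨α, (Finset.mem_filter.1 hα).2, hγz.trans_le (hmax' γ hγ), hmax'⟩

lemma exists_indecomposable_dominant :
    ∃ c : ℝ, 0 < c ∧ c ≤ 1 ∧ ∀ z : V, (∃ β ∈ D.Rpos, 0 < ⟪β, z⟫) →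
      ∃ α, D.Indecomposable α ∧ 0 < ⟪α, z⟫ ∧ ∀ β ∈ D.Rpos, c * ⟪β, z⟫ ≤ ⟪α, z⟫ := by
  obtain ⟨u, hu⟩ := D.exists_height
  rcases D.Rpos.eq_empty_or_nonempty with hemp | hne
  · exact ⟨1, one_pos, le_rfl, fun z ⟨β, hβ, _⟩ => absurd hβ (hemp ▸ Finset.notMem_empty β)⟩
  obtain ⟨a, ha, hmin⟩ := D.Rpos.exists_min_image (⟪·, u⟫) hne
  obtain ⟨b, hb, hmax⟩ := D.Rpos.exists_max_image (⟪·, u⟫) hne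
  refine ⟨⟪a, u⟫ / ⟪b, u⟫, div_pos (hu a ha) (hu b hb), (div_le_one (hu b hb)).2 (hmin b hb), ?_⟩
  rintro z ⟨β₀, hβ₀, hβ₀z⟩
  obtain ⟨α, hα, hαz, hαmax⟩ := D.exists_indecomposable_max hβ₀ hβ₀z
  refine ⟨α, hα, hαz, fun β hβ => ?_⟩
  have hle : ⟪a, u⟫ * ⟪β, z⟫ ≤ ⟪β, u⟫ * ⟪α, z⟫ := by
    refine AddSubmonoid.closure_induction
      (motive := fun γ _ => ⟪a, u⟫ * ⟪γ, z⟫ ≤ ⟪γ, u⟫ * ⟪α, z⟫) (fun γ hγ => ?_) (by simp)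
      (fun γ δ _ _ hγ hδ => ?_) (D.mem_closure_indecomposable hβ)
    · exact (mul_le_mul_of_nonneg_left (hαmax γ hγ) (hu a ha).le).trans
        (mul_le_mul_of_nonneg_right (hmin γ hγ.1) hαz.le)
    · rw [inner_add_left, inner_add_left]
      linarith
  rw [div_mul_eq_mul_div, div_le_iff₀ (hu b hb), mul_comm ⟪α, z⟫]
  exact hle.trans (mul_le_mul_of_nonneg_right (hmax β hβ) hαz.le)

end HOData

/-! ### The function `s ↦ s / (eˢ - 1)` -/

/-- The generating function `s ↦ s / (eˢ - 1)` of the Bernoulli numbers, with the junk value `0`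
at `s = 0`. It is the exponentially decaying part of `s / (1 - e⁻ˢ)`. -/
def bernoulliKernel (s : ℝ) : ℝ := s / (Real.exp s - 1)

lemma bernoulliKernel_pos {s : ℝ} (hs : 0 < s) : 0 < bernoulliKernel s :=
  div_pos hs (sub_pos.2 (Real.one_lt_exp_iff.2 hs))

lemma bernoulliKernel_le_one {s : ℝ} (hs : 0 < s) : bernoulliKernel s ≤ 1 := by
  have := Real.add_one_lt_exp hs.ne'
  exact (div_le_one (by linarith)).2 (by linarith)

lemma bernoulliKernel_mul_exp_le {s : ℝ} (hs : 0 < s) :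
    bernoulliKernel s * Real.exp s ≤ 1 + s := by
  have := Real.add_one_lt_exp hs.ne'
  rw [bernoulliKernel, div_mul_eq_mul_div, div_le_iff₀ (by linarith)]
  nlinarith

lemma exists_bernoulliKernel_mul_pow_le (j : ℕ) :
    ∃ C : ℝ, 0 < C ∧ ∀ s : ℝ, 0 < s → bernoulliKernel s * (1 + s) ^ j ≤ C := by
  refine ⟨(j + 1).factorial * Real.exp 1, by positivity, fun s hs => ?_⟩
  have pow_le_exp : (1 + s) ^ (j + 1) ≤ Real.exp 1 * Real.exp s * (j + 1).factorial := by
    rw [← Real.exp_add, ← div_le_iff₀ (by positivity)]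
    exact Real.pow_div_factorial_le_exp (1 + s) (by positivity) (j + 1)
  refine le_of_mul_le_mul_right ?_ (Real.exp_pos s)
  calc bernoulliKernel s * (1 + s) ^ j * Real.exp s
      = bernoulliKernel s * Real.exp s * (1 + s) ^ j := by ring
    _ ≤ (1 + s) * (1 + s) ^ j := by gcongr; exact bernoulliKernel_mul_exp_le hs
    _ = (1 + s) ^ (j + 1) := by ring
    _ ≤ Real.exp 1 * Real.exp s * (j + 1).factorial := pow_le_exp
    _ = (j + 1).factorial * Real.exp 1 * Real.exp s := by ring

lemma div_one_sub_exp_neg {s : ℝ} (hs : s ≠ 0) :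
    s / (1 - Real.exp (-s)) = max s 0 + bernoulliKernel |s| := by
  rcases hs.lt_or_gt with h | h
  · rw [max_eq_right h.le, abs_of_neg h, bernoulliKernel, zero_add, ← neg_div_neg_eq s, neg_sub]
  · have h1 : Real.exp s - 1 ≠ 0 := (sub_pos.2 (Real.one_lt_exp_iff.2 h)).ne'
    have h2 : 1 - Real.exp (-s) = (Real.exp s - 1) / Real.exp s := by
      rw [sub_div, div_self (Real.exp_pos s).ne', Real.exp_neg, one_div]
    rw [max_eq_left h.le, abs_of_pos h, bernoulliKernel, h2]
    field_simp
    ring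

namespace HOData

variable (D : HOData V)

/-! ### The reference product -/

/-- The reference product `θ_A(z) = ∏_{β ∈ R₀⁺} (1 + A (β, z)⁺)`. For `A = 1` it describes the
size of the rescaled Opdam function; the other values of `A` serve to build barriers. -/
def theta (A : ℝ) (z : V) : ℝ := ∏ β ∈ Rpos0 D, (1 + A * max ⟪β, z⟫ 0)

/-- The number of positive indivisible roots that are positive at `z`. It is the degree of growth
of `theta` along the ray through `z`. -/
def posCount (z : V) : ℕ := ((Rpos0 D).filter fun β => 0 < ⟪β, z⟫).card

/-- All roots have absolute value at least `m` at `z`: quantitative regularity. -/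
def Separated (m : ℝ) (z : V) : Prop := ∀ γ ∈ D.R, m ≤ |⟪γ, z⟫|

/-- The positive one of the two roots `± r_α β`. For fixed `α`, this is an involution of the
positive indivisible roots. -/
def foldRefl (α β : V) : V := if rRefl α β ∈ D.Rpos then rRefl α β else -rRefl α β

/-- The value `(β, z)`, with the opposite sign if `r_α` makes `β` negative. These are the values
of the positive indivisible roots at `r_α z`, indexed by `foldRefl`. -/
def flipVal (α z β : V) : ℝ := if rRefl α β ∈ D.Rpos then ⟪β, z⟫ else -⟪β, z⟫

section Fold

variable {D}
variable {α β z : V}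

lemma foldRefl_mem (hα : α ∈ D.R) (hβ : β ∈ Rpos0 D) : D.foldRefl α β ∈ Rpos0 D := by
  obtain ⟨hβ1, hβ2⟩ := D.mem_Rpos0.1 hβ
  have hhalf : (2 : ℝ)⁻¹ • rRefl α β ∉ D.R := fun h => hβ2 <| by
    have := D.refl_mem α hα _ h
    rwa [rRefl_smul, rRefl_rRefl] at this
  rw [foldRefl]
  split_ifs with h
  · exact D.mem_Rpos0.2 ⟨h, hhalf⟩
  · refine D.mem_Rpos0.2
      ⟨D.neg_mem_pos (D.refl_mem α hα β (D.pos_subset hβ1)) h, fun h' => hhalf ?_⟩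
    simpa only [smul_neg, neg_neg] using D.neg_mem _ h'

lemma rRefl_foldRefl (α β : V) :
    rRefl α (D.foldRefl α β) = if rRefl α β ∈ D.Rpos then β else -β := by
  rw [foldRefl]
  split_ifs
  · exact rRefl_rRefl α β
  · rw [rRefl_neg, rRefl_rRefl]

lemma rRefl_foldRefl_mem_iff (hβ : β ∈ Rpos0 D) :
    rRefl α (D.foldRefl α β) ∈ D.Rpos ↔ rRefl α β ∈ D.Rpos := by
  rw [rRefl_foldRefl]
  split_ifs with h
  · exact iff_of_true (D.pos_of_mem_Rpos0 hβ) h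
  · exact iff_of_false (D.neg_notMem_pos (D.pos_of_mem_Rpos0 hβ)) h

lemma foldRefl_foldRefl (hβ : β ∈ Rpos0 D) : D.foldRefl α (D.foldRefl α β) = β := by
  have hβ1 := D.pos_of_mem_Rpos0 hβ
  rw [foldRefl, rRefl_foldRefl]
  by_cases h : rRefl α β ∈ D.Rpos
  · rw [if_pos h, if_pos hβ1]
  · rw [if_neg h, if_neg (D.neg_notMem_pos hβ1), neg_neg]

@[to_additive]
lemma prod_foldRefl {M : Type*} [CommMonoid M] (hα : α ∈ D.R) (f : V → M) :
    ∏ β ∈ Rpos0 D, f (D.foldRefl α β) = ∏ β ∈ Rpos0 D, f β :=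
  Finset.prod_nbij' (D.foldRefl α) (D.foldRefl α) (fun _ h => foldRefl_mem hα h)
    (fun _ h => foldRefl_mem hα h) (fun _ h => foldRefl_foldRefl h)
    (fun _ h => foldRefl_foldRefl h) (fun _ _ => rfl)

lemma inner_foldRefl_rRefl (α β z : V) : ⟪D.foldRefl α β, rRefl α z⟫ = D.flipVal α z β := by
  rw [inner_rRefl, rRefl_foldRefl, flipVal]
  split_ifs
  · rfl
  · exact inner_neg_left β z

lemma flipVal_foldRefl_of_mem (hβ : β ∈ Rpos0 D) (h : rRefl α β ∈ D.Rpos) :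
    D.flipVal α z (D.foldRefl α β) = ⟪D.foldRefl α β, z⟫ := by
  rw [flipVal, if_pos ((rRefl_foldRefl_mem_iff hβ).2 h)]

lemma flipVal_foldRefl_of_notMem (hβ : β ∈ Rpos0 D) (h : rRefl α β ∉ D.Rpos) :
    D.flipVal α z (D.foldRefl α β) = -⟪D.foldRefl α β, z⟫ := by
  rw [flipVal, if_neg (mt (rRefl_foldRefl_mem_iff hβ).1 h)]

lemma foldRefl_of_rRefl_eq_neg (hβ : β ∈ Rpos0 D) (h : rRefl α β = -β) :
    D.foldRefl α β = β := by
  rw [foldRefl, h, if_neg (D.neg_notMem_pos (D.pos_of_mem_Rpos0 hβ)), neg_neg]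

lemma flipVal_of_rRefl_eq_neg (hβ : β ∈ Rpos0 D) (h : rRefl α β = -β) :
    D.flipVal α z β = -⟪β, z⟫ := by
  rw [flipVal, h, if_neg (D.neg_notMem_pos (D.pos_of_mem_Rpos0 hβ))]

lemma inner_add_inner_foldRefl_pos (hα : α ∈ D.Rpos) (hz : 0 < ⟪α, z⟫) (hβ : β ∈ Rpos0 D)
    (h : rRefl α β ∉ D.Rpos) : 0 < ⟪β, z⟫ + ⟪D.foldRefl α β, z⟫ := by
  obtain ⟨u, hu⟩ := D.exists_height
  have hβ1 := D.pos_of_mem_Rpos0 hβ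
  have hneg := D.neg_mem_pos (D.refl_mem α (D.pos_subset hα) β (D.pos_subset hβ1)) h
  have sum_eq (v : V) : ⟪β, v⟫ + ⟪-rRefl α β, v⟫ = ⟪coroot α, β⟫ * ⟪α, v⟫ := by
    rw [← inner_add_left, rRefl, neg_sub, add_sub_cancel, real_inner_smul_left]
  have hcoroot : 0 < ⟪coroot α, β⟫ := by
    refine pos_of_mul_pos_left (b := ⟪α, u⟫) ?_ (hu α hα).le
    rw [← sum_eq u]
    exact add_pos (hu β hβ1) (hu _ hneg)
  rw [foldRefl, if_neg h, sum_eq z]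
  exact mul_pos hcoroot hz

end Fold

lemma theta_pos {A : ℝ} (hA : 0 ≤ A) (z : V) : 0 < D.theta A z :=
  Finset.prod_pos fun β _ => by positivity

lemma theta_rRefl {α : V} (hα : α ∈ D.R) (A : ℝ) (z : V) :
    D.theta A (rRefl α z) = ∏ β ∈ Rpos0 D, (1 + A * max (D.flipVal α z β) 0) := by
  rw [theta, ← prod_foldRefl hα]
  exact Finset.prod_congr rfl fun β _ => by rw [inner_foldRefl_rRefl]

lemma posCount_rRefl {α : V} (hα : α ∈ D.R) (z : V) :
    D.posCount (rRefl α z) = ∑ β ∈ Rpos0 D, if 0 < D.flipVal α z β then 1 else 0 := by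
  rw [posCount, Finset.card_filter, ← sum_foldRefl hα]
  exact Finset.sum_congr rfl fun β _ => by rw [inner_foldRefl_rRefl]

/- The factors of `θ_A(r_α z)` cannot be compared with those of `θ_A(z)` one by one: a factor may
grow, but then its partner under `foldRefl` shrinks at least as much. Hence the comparison is made
for the squares of the products, whose factors are grouped into such pairs. -/
lemma theta_rRefl_mul_prod_le {α z : V} (hα : α ∈ D.R) {A : ℝ} (hA : 0 ≤ A) {c : V → ℝ}
    (h : ∀ β ∈ Rpos0 D, (1 + A * max (D.flipVal α z β) 0) *
      (1 + A * max (D.flipVal α z (D.foldRefl α β)) 0) * c β ^ 2 ≤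
      (1 + A * max ⟪β, z⟫ 0) * (1 + A * max ⟪D.foldRefl α β, z⟫ 0)) :
    D.theta A (rRefl α z) * ∏ β ∈ Rpos0 D, c β ≤ D.theta A z := by
  refine le_of_pow_le_pow_left₀ two_ne_zero (D.theta_pos hA z).le ?_
  have hprod := Finset.prod_le_prod (fun β _ => by positivity) h
  simp only [Finset.prod_mul_distrib, Finset.prod_pow] at hprod
  rw [prod_foldRefl hα (fun β => 1 + A * max (D.flipVal α z β) 0),
    prod_foldRefl hα (fun β => 1 + A * max ⟪β, z⟫ 0), ← D.theta_rRefl hα, ← theta] at hprod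
  rwa [mul_pow, sq (D.theta A _), sq (D.theta A z)]

section Inversion

variable {D}
variable {α β δ z : V}

lemma flipVal_factors_mul_le (hα : α ∈ D.Rpos) (hz : 0 < ⟪α, z⟫) (hβ : β ∈ Rpos0 D) {A : ℝ}
    (hA : 0 ≤ A) :
    (1 + A * max (D.flipVal α z β) 0) * (1 + A * max (D.flipVal α z (D.foldRefl α β)) 0) ≤
      (1 + A * max ⟪β, z⟫ 0) * (1 + A * max ⟪D.foldRefl α β, z⟫ 0) := by
  by_cases h : rRefl α β ∈ D.Rpos
  · rw [flipVal_foldRefl_of_mem hβ h, flipVal, if_pos h]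
  · have hsum := inner_add_inner_foldRefl_pos hα hz hβ h
    rw [flipVal_foldRefl_of_notMem hβ h, flipVal, if_neg h, mul_comm (1 + A * max ⟪β, z⟫ 0)]
    gcongr <;> linarith

lemma flipVal_factors_mul_sq_le_of_rRefl_eq_neg (hβ : β ∈ Rpos0 D) (h : rRefl α β = -β)
    (hz : 0 < ⟪β, z⟫) (A : ℝ) :
    (1 + A * max (D.flipVal α z β) 0) * (1 + A * max (D.flipVal α z (D.foldRefl α β)) 0) *
      (1 + A * ⟪β, z⟫) ^ 2 ≤ (1 + A * max ⟪β, z⟫ 0) * (1 + A * max ⟪D.foldRefl α β, z⟫ 0) := by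
  rw [foldRefl_of_rRefl_eq_neg hβ h, flipVal_of_rRefl_eq_neg hβ h, max_eq_left hz.le,
    max_eq_right (neg_nonpos.2 hz.le)]
  exact le_of_eq (by ring)

lemma flipVal_factors_mul_sq_le_of_separated (hα : α ∈ D.R) (hδ : δ ∈ Rpos0 D)
    (hinv : rRefl α δ ∉ D.Rpos) (hδz : 0 < ⟪δ, z⟫) (hδz' : 0 < ⟪D.foldRefl α δ, z⟫) {m : ℝ}
    (hm : 0 ≤ m) (hsep : D.Separated m z) :
    (1 + 1 * max (D.flipVal α z δ) 0) * (1 + 1 * max (D.flipVal α z (D.foldRefl α δ)) 0) *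
      (1 + m) ^ 2 ≤ (1 + 1 * max ⟪δ, z⟫ 0) * (1 + 1 * max ⟪D.foldRefl α δ, z⟫ 0) := by
  have h1 := hsep δ (D.pos_subset (D.pos_of_mem_Rpos0 hδ))
  have h2 := hsep _ (D.pos_subset (D.pos_of_mem_Rpos0 (foldRefl_mem hα hδ)))
  rw [abs_of_pos hδz] at h1
  rw [abs_of_pos hδz'] at h2
  rw [flipVal_foldRefl_of_notMem hδ hinv, flipVal, if_neg hinv,
    max_eq_right (neg_nonpos.2 hδz.le), max_eq_right (neg_nonpos.2 hδz'.le),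
    max_eq_left hδz.le, max_eq_left hδz'.le]
  nlinarith

lemma theta_rRefl_mul_one_add_le (hα : α ∈ D.Rpos) (hαz : 0 < ⟪α, z⟫) (hβ : β ∈ Rpos0 D)
    (hαβ : rRefl α β = -β) (hβz : 0 < ⟪β, z⟫) {A : ℝ} (hA : 0 ≤ A) :
    D.theta A (rRefl α z) * (1 + A * ⟪β, z⟫) ≤ D.theta A z := by
  have := D.theta_rRefl_mul_prod_le (z := z) (D.pos_subset hα) hA
    (c := fun δ => if δ = β then 1 + A * ⟪β, z⟫ else 1) (fun δ hδ => by
      split_ifs with hd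
      · rw [hd]
        exact flipVal_factors_mul_sq_le_of_rRefl_eq_neg hβ hαβ hβz A
      · rw [one_pow, mul_one]
        exact flipVal_factors_mul_le hα hαz hδ hA)
  rwa [Finset.prod_ite_eq', if_pos hβ] at this

lemma theta_rRefl_mul_le_of_inversion (hα : α ∈ D.Rpos) (hαz : 0 < ⟪α, z⟫) (hβ : β ∈ Rpos0 D)
    (hαβ : rRefl α β = -β) (hβz : 0 < ⟪β, z⟫) (hδ : δ ∈ Rpos0 D) (hne : δ ≠ β)
    (hinv : rRefl α δ ∉ D.Rpos) (hδz : 0 < ⟪δ, z⟫) (hδz' : 0 < ⟪D.foldRefl α δ, z⟫) {m : ℝ}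
    (hm : 0 ≤ m) (hsep : D.Separated m z) :
    D.theta 1 (rRefl α z) * (1 + ⟪β, z⟫) * (1 + m) ≤ D.theta 1 z := by
  have := D.theta_rRefl_mul_prod_le (z := z) (D.pos_subset hα) zero_le_one
    (c := fun ε => (if ε = β then 1 + ⟪β, z⟫ else 1) * (if ε = δ then 1 + m else 1))
    (fun ε hε => by
      by_cases h1 : ε = β
      · rw [if_pos h1, if_neg (h1.trans_ne hne.symm), mul_one, h1]
        simpa only [one_mul] using flipVal_factors_mul_sq_le_of_rRefl_eq_neg hβ hαβ hβz 1
      · by_cases h2 : ε = δ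
        · rw [if_neg h1, if_pos h2, one_mul (1 + m), h2]
          exact flipVal_factors_mul_sq_le_of_separated (D.pos_subset hα) hδ hinv hδz hδz' hm hsep
        · rw [if_neg h1, if_neg h2, mul_one (1 : ℝ), one_pow, mul_one]
          exact flipVal_factors_mul_le hα hαz hε zero_le_one)
  rwa [Finset.prod_mul_distrib, Finset.prod_ite_eq', Finset.prod_ite_eq', if_pos hβ, if_pos hδ,
    ← mul_assoc] at this

lemma two_le_posCount (hβ : β ∈ Rpos0 D) (hδ : δ ∈ Rpos0 D) (hne : δ ≠ β) (hβz : 0 < ⟪β, z⟫)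
    (hδz : 0 < ⟪δ, z⟫) : 2 ≤ D.posCount z :=
  Finset.one_lt_card.2 ⟨δ, Finset.mem_filter.2 ⟨hδ, hδz⟩, β, Finset.mem_filter.2 ⟨hβ, hβz⟩, hne⟩

lemma card_pos_flipVal_pair (hreg : HORegular D z) (hα : α ∈ D.Rpos) (hαz : 0 < ⟪α, z⟫)
    (hδ : δ ∈ Rpos0 D)
    (hpair : rRefl α δ ∉ D.Rpos → 0 < ⟪δ, z⟫ → ⟪D.foldRefl α δ, z⟫ ≤ 0) :
    (if 0 < ⟪δ, z⟫ then 1 else 0) + (if 0 < ⟪D.foldRefl α δ, z⟫ then 1 else 0) =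
      (if 0 < D.flipVal α z δ then 1 else 0) +
        if 0 < D.flipVal α z (D.foldRefl α δ) then 1 else 0 := by
  by_cases hinv : rRefl α δ ∈ D.Rpos
  · rw [flipVal_foldRefl_of_mem hδ hinv, flipVal, if_pos hinv]
  have hsum := inner_add_inner_foldRefl_pos hα hαz hδ hinv
  have ne_zero {γ : V} (hγ : γ ∈ Rpos0 D) : ⟪γ, z⟫ ≠ 0 :=
    hreg γ (D.pos_subset (D.pos_of_mem_Rpos0 hγ))
  rw [flipVal_foldRefl_of_notMem hδ hinv, flipVal, if_neg hinv]
  rcases (ne_zero hδ).lt_or_gt with hneg | hpos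
  · have hpos' : 0 < ⟪D.foldRefl α δ, z⟫ := by linarith
    simp [hneg, hneg.not_gt, hpos', hpos'.not_gt]
  · have hneg' : ⟪D.foldRefl α δ, z⟫ < 0 :=
      (hpair hinv hpos).lt_of_ne (ne_zero (foldRefl_mem (D.pos_subset hα) hδ))
    simp [hpos, hpos.not_gt, hneg', hneg'.not_gt]

lemma posCount_rRefl_add_one (hreg : HORegular D z) (hα : α ∈ D.Rpos) (hαz : 0 < ⟪α, z⟫)
    (hβ : β ∈ Rpos0 D) (hαβ : rRefl α β = -β) (hβz : 0 < ⟪β, z⟫)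
    (hpair : ∀ δ ∈ Rpos0 D, δ ≠ β → rRefl α δ ∉ D.Rpos → 0 < ⟪δ, z⟫ →
      ⟪D.foldRefl α δ, z⟫ ≤ 0) :
    D.posCount (rRefl α z) + 1 = D.posCount z := by
  have hαR := D.pos_subset hα
  have pair_eq (δ : V) (hδ : δ ∈ Rpos0 D) :
      (if 0 < ⟪δ, z⟫ then 1 else 0) + (if 0 < ⟪D.foldRefl α δ, z⟫ then 1 else 0) =
        (if 0 < D.flipVal α z δ then 1 else 0) +
          (if 0 < D.flipVal α z (D.foldRefl α δ) then 1 else 0) + if δ = β then 2 else 0 := by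
    by_cases hδβ : δ = β
    · rw [hδβ, foldRefl_of_rRefl_eq_neg hβ hαβ, flipVal_of_rRefl_eq_neg hβ hαβ]
      simp [hβz, hβz.le]
    · rw [if_neg hδβ, add_zero]
      exact card_pos_flipVal_pair hreg hα hαz hδ (hpair δ hδ hδβ)
  have hsum := Finset.sum_congr rfl pair_eq
  simp only [Finset.sum_add_distrib, Finset.sum_ite_eq', if_pos hβ] at hsum
  rw [sum_foldRefl hαR (fun δ => if 0 < ⟪δ, z⟫ then 1 else 0),
    sum_foldRefl hαR (fun δ => if 0 < D.flipVal α z δ then 1 else 0), ← D.posCount_rRefl hαR,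
    ← Finset.card_filter, ← posCount] at hsum
  omega

lemma theta_rRefl_mul_le (hα : α ∈ D.Rpos) (hαz : 0 < ⟪α, z⟫) {A : ℝ} (hA : 0 ≤ A) :
    D.theta A (rRefl α z) * (2 + A * ⟪α, z⟫) ≤ 2 * D.theta A z := by
  obtain ⟨β, hβ, hαβ, hle⟩ := D.exists_indivisible hα
  have hle := hle z hαz
  have hθ := D.theta_pos hA (rRefl α z)
  have hgain := theta_rRefl_mul_one_add_le hα hαz hβ hαβ (by linarith : 0 < ⟪β, z⟫) hA
  calc D.theta A (rRefl α z) * (2 + A * ⟪α, z⟫)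
      ≤ D.theta A (rRefl α z) * (2 + A * (2 * ⟪β, z⟫)) := by gcongr
    _ = 2 * (D.theta A (rRefl α z) * (1 + A * ⟪β, z⟫)) := by ring
    _ ≤ 2 * D.theta A z := by gcongr

lemma posCount_rRefl_add_one_or (hreg : HORegular D z) (hα : α ∈ D.Rpos) (hαz : 0 < ⟪α, z⟫) :
    D.posCount (rRefl α z) + 1 = D.posCount z ∨
      2 ≤ D.posCount z ∧ ∀ m : ℝ, 0 ≤ m → D.Separated m z →
        D.theta 1 (rRefl α z) * (2 + ⟪α, z⟫) * (1 + m) ≤ 2 * D.theta 1 z := by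
  obtain ⟨β, hβ, hαβ, hle⟩ := D.exists_indivisible hα
  have hle := hle z hαz
  have hβz : 0 < ⟪β, z⟫ := by linarith
  by_cases hex : ∃ δ ∈ Rpos0 D, δ ≠ β ∧ rRefl α δ ∉ D.Rpos ∧ 0 < ⟪δ, z⟫ ∧
      0 < ⟪D.foldRefl α δ, z⟫
  · obtain ⟨δ, hδ, hne, hinv, hδz, hδz'⟩ := hex
    refine Or.inr ⟨two_le_posCount hβ hδ hne hβz hδz, fun m hm hsep => ?_⟩
    have hθ := D.theta_pos zero_le_one (rRefl α z)
    have hgain := theta_rRefl_mul_le_of_inversion hα hαz hβ hαβ hβz hδ hne hinv hδz hδz' hm hsep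
    calc D.theta 1 (rRefl α z) * (2 + ⟪α, z⟫) * (1 + m)
        ≤ D.theta 1 (rRefl α z) * (2 + 2 * ⟪β, z⟫) * (1 + m) := by gcongr
      _ = 2 * (D.theta 1 (rRefl α z) * (1 + ⟪β, z⟫) * (1 + m)) := by ring
      _ ≤ 2 * D.theta 1 z := by gcongr
  · push Not at hex
    exact Or.inl (posCount_rRefl_add_one hreg hα hαz hβ hαβ hβz hex)

lemma theta_rRefl_of_indecomposable (h : D.Indecomposable α) (hz : 0 < ⟪α, z⟫) (A : ℝ) :
    D.theta A (rRefl α z) * (1 + A * ⟪α, z⟫) = D.theta A z := by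
  have hα0 := h.mem_Rpos0
  rw [D.theta_rRefl (D.pos_subset h.1), theta, ← Finset.mul_prod_erase _ _ hα0,
    ← Finset.mul_prod_erase _ (fun β => 1 + A * max ⟪β, z⟫ 0) hα0,
    flipVal_of_rRefl_eq_neg hα0 (rRefl_self α), max_eq_right (neg_nonpos.2 hz.le),
    max_eq_left hz.le, mul_zero, add_zero, one_mul, mul_comm]
  congr 1
  refine Finset.prod_congr rfl fun β hβ => ?_
  obtain ⟨h1, h2⟩ := Finset.mem_erase.1 hβ
  rw [flipVal, if_pos (h.rRefl_mem_pos h2 h1)]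

end Inversion

lemma exists_max_inner_rRefl_le : ∃ c : ℝ, 0 ≤ c ∧ ∀ α ∈ D.R, ∀ β ∈ D.R, ∀ z : V,
    max ⟪β, rRefl α z⟫ 0 ≤ max ⟪β, z⟫ 0 + c * |⟪α, z⟫| := by
  refine ⟨∑ p ∈ D.R ×ˢ D.R, |⟪coroot p.1, p.2⟫|, by positivity, fun α hα β hβ z => ?_⟩
  have hcoroot : |⟪coroot α, β⟫| ≤ ∑ p ∈ D.R ×ˢ D.R, |⟪coroot p.1, p.2⟫| :=
    Finset.single_le_sum (f := fun p : V × V => |⟪coroot p.1, p.2⟫|) (fun _ _ => abs_nonneg _)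
      (Finset.mk_mem_product hα hβ)
  have hle : -⟪coroot α, β⟫ * ⟪α, z⟫ ≤ (∑ p ∈ D.R ×ˢ D.R, |⟪coroot p.1, p.2⟫|) * |⟪α, z⟫| := by
    refine (le_abs_self _).trans ?_
    rw [abs_mul, abs_neg]
    gcongr
  refine max_le ?_ (by positivity)
  rw [inner_rRefl, rRefl, inner_sub_left, real_inner_smul_left]
  linarith [le_max_left ⟪β, z⟫ 0]

lemma exists_theta_rRefl_le : ∃ c : ℝ, 0 ≤ c ∧ ∀ A : ℝ, 0 ≤ A → ∀ α ∈ D.R, ∀ z : V,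
    D.theta A (rRefl α z) ≤ (1 + A * c * |⟪α, z⟫|) ^ (Rpos0 D).card * D.theta A z := by
  obtain ⟨c, hc, hle⟩ := D.exists_max_inner_rRefl_le
  refine ⟨c, hc, fun A hA α hα z => ?_⟩
  rw [theta, theta, ← Finset.prod_const, ← Finset.prod_mul_distrib]
  refine Finset.prod_le_prod (fun β _ => by positivity) fun β hβ => ?_
  calc 1 + A * max ⟪β, rRefl α z⟫ 0
      ≤ 1 + A * (max ⟪β, z⟫ 0 + c * |⟪α, z⟫|) := by
        gcongr
        exact hle α hα β (D.pos_subset (D.pos_of_mem_Rpos0 hβ)) z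
    _ ≤ 1 + A * (max ⟪β, z⟫ 0 + c * |⟪α, z⟫|) + A * c * |⟪α, z⟫| * (A * max ⟪β, z⟫ 0) :=
        le_add_of_nonneg_right (by positivity)
    _ = (1 + A * c * |⟪α, z⟫|) * (1 + A * max ⟪β, z⟫ 0) := by ring

end HOData

/-! ### A comparison principle along rays -/

section RealInduction

open Set Filter Topology

lemma forall_pos_of_eventually_of_forall_lt {P : ℝ → Prop} (h0 : ∀ᶠ t in 𝓝[>] 0, P t)
    (hstep : ∀ T, 0 < T → (∀ s ∈ Ioo 0 T, P s) → ∀ᶠ s in 𝓝 T, P s) {t : ℝ} (ht : 0 < t) :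
    P t := by
  let S : Set ℝ := {T | ∀ r ∈ Ioo 0 T, P r}
  have hclosed : IsClosed S := by
    have : S = ⋂ r ∈ {r | 0 < r ∧ ¬P r}, Iic r := by
      ext T
      simp only [S, mem_ofPred_eq, mem_Ioo, mem_iInter, mem_Iic, and_imp]
      exact forall₂_congr fun r _ => by rw [← not_lt, not_imp_not]
    exact this ▸ isClosed_biInter fun _ _ => isClosed_Iic
  have hS : Icc 0 (t + 1) ⊆ S := by
    refine (hclosed.inter isClosed_Icc).Icc_subset_of_forall_exists_gt
      (fun r hr => absurd hr.1 hr.2.le.not_gt) fun x hx y hxy => ?_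
    have hright : ∀ᶠ s in 𝓝[>] x, P s := by
      rcases hx.2.1.eq_or_lt with rfl | hx0
      · exact h0
      · exact (hstep x hx0 hx.1).filter_mono nhdsWithin_le_nhds
    have hat : 0 < x → P x := fun hx0 => (hstep x hx0 hx.1).self_of_nhds
    obtain ⟨u, hxu, hu⟩ := mem_nhdsGT_iff_exists_Ioo_subset.1 hright
    refine ⟨min u y, fun r hr => ?_, lt_min hxu hxy, min_le_right _ _⟩
    rcases lt_trichotomy r x with h | rfl | h
    · exact hx.1 r ⟨hr.1, h⟩
    · exact hat hr.1
    · exact hu ⟨h, hr.2.trans_le (min_le_left _ _)⟩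
  exact hS ⟨by linarith, le_rfl⟩ t ⟨ht, lt_add_one t⟩

/-- The differential inequality says that `t ^ K * g t` is nondecreasing. -/
lemma pos_of_neg_mul_le_mul_deriv {g g' : ℝ → ℝ} {K T : ℝ} (hT : 0 < T)
    (hg : ∀ t, 0 < t → HasDerivAt g (g' t) t) (hpos : ∀ t ∈ Ioo 0 T, 0 < g t)
    (hK : ∀ t ∈ Ioo 0 T, -(K * g t) ≤ t * g' t) : 0 < g T := by
  have hder : ∀ s, 0 < s →
      HasDerivAt (fun s => s ^ K * g s) (K * s ^ (K - 1) * g s + s ^ K * g' s) s :=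
    fun s hs => (Real.hasDerivAt_rpow_const (Or.inl hs.ne')).mul (hg s hs)
  have hmono : MonotoneOn (fun s => s ^ K * g s) (Icc (T / 2) T) := by
    refine monotoneOn_of_hasDerivWithinAt_nonneg (convex_Icc _ _)
      (fun s hs => (hder s (by linarith [hs.1])).continuousAt.continuousWithinAt)
      (fun s hs => ?_) (fun s hs => ?_) (f' := fun s => K * s ^ (K - 1) * g s + s ^ K * g' s)
    all_goals rw [interior_Icc] at hs
    · exact (hder s (by linarith [hs.1])).hasDerivWithinAt
    · have hs0 : 0 < s := by linarith [hs.1]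
      have hfactor : K * s ^ (K - 1) * g s + s ^ K * g' s =
          s ^ (K - 1) * (K * g s + s * g' s) := by
        rw [Real.rpow_sub_one hs0.ne']
        field_simp
      rw [hfactor]
      exact mul_nonneg (Real.rpow_nonneg hs0.le _) (by linarith [hK s ⟨hs0, hs.2⟩])
  have hhalf : 0 < (T / 2) ^ K * g (T / 2) :=
    mul_pos (Real.rpow_pos_of_pos (by linarith) _) (hpos _ ⟨by linarith, by linarith⟩)
  have hle : (T / 2) ^ K * g (T / 2) ≤ T ^ K * g T :=
    hmono (left_mem_Icc.2 (by linarith)) (right_mem_Icc.2 (by linarith)) (by linarith)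
  exact pos_of_mul_pos_right (hhalf.trans_le hle) (Real.rpow_nonneg hT.le _)

lemma pos_of_cooperative {ι : Type*} [Finite ι] {f f' : ι → ℝ → ℝ} {K : ℝ}
    (h0 : ∀ i, ∀ᶠ t in 𝓝[>] 0, 0 < f i t)
    (hd : ∀ i t, 0 < t → HasDerivAt (f i) (f' i t) t)
    (hK : ∀ t, 0 < t → (∀ j, 0 ≤ f j t) → ∀ i, -(K * f i t) ≤ t * f' i t)
    (i : ι) {t : ℝ} (ht : 0 < t) : 0 < f i t := by
  refine forall_pos_of_eventually_of_forall_lt (P := fun t => ∀ j, 0 < f j t)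
    (eventually_all.2 h0) (fun T hT hlt => eventually_all.2 fun j => ?_) ht i
  have hposT : 0 < f j T :=
    pos_of_neg_mul_le_mul_deriv hT (hd j) (fun s hs => hlt s hs j)
      fun s hs => hK s hs.1 (fun i => (hlt s hs i).le) j
  exact (hd j T hT).continuousAt.eventually (lt_mem_nhds hposT)

end RealInduction

/-- `f` has derivative `v` at `z` in the direction `z`. -/
def HasRadialDerivAt (f : V → ℝ) (v : ℝ) (z : V) : Prop :=
  HasDerivAt (fun t : ℝ => f (t • z)) v 1

lemma HasRadialDerivAt.hasDerivAt {f : V → ℝ} {v t : ℝ} {z : V} (ht : t ≠ 0)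
    (h : HasRadialDerivAt f v (t • z)) : HasDerivAt (fun s : ℝ => f (s • z)) (v / t) t := by
  have hscale : HasDerivAt (fun s : ℝ => s / t) (1 / t) t := (hasDerivAt_id t).div_const t
  have hradial : HasDerivAt (fun s : ℝ => f (s • t • z)) v (t / t) := by
    rwa [div_self ht]
  have hcomp := hradial.comp (h := fun s : ℝ => s / t) t hscale
  simpa only [Function.comp_def, smul_smul, div_mul_cancel₀ _ ht, mul_one_div] using hcomp

lemma hasRadialDerivAt_of_homogeneous {f : V → ℝ} {z : V}
    (h : ∀ t : ℝ, 0 < t → f (t • z) = t * f z) : HasRadialDerivAt f (f z) z := by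
  refine (hasDerivAt_mul_const (f z)).congr_of_eventuallyEq ?_
  filter_upwards [lt_mem_nhds (zero_lt_one (α := ℝ))] with t ht using h t ht

lemma hasRadialDerivAt_of_differentiableAt {f : V → ℝ} {z : V} (h : DifferentiableAt ℝ f z) :
    HasRadialDerivAt f (fderiv ℝ f z z) z := by
  have hline : HasDerivAt (fun t : ℝ => t • z) z 1 := by
    simpa using (hasDerivAt_id (1 : ℝ)).smul_const z
  exact HasFDerivAt.comp_hasDerivAt (1 : ℝ) (by simpa using h.hasFDerivAt) hline

lemma max_inner_smul (β z : V) {t : ℝ} (ht : 0 ≤ t) :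
    max ⟪β, t • z⟫ 0 = t * max ⟪β, z⟫ 0 := by
  rw [inner_smul_right, mul_max_of_nonneg _ _ ht, mul_zero]

lemma abs_inner_smul (β z : V) {t : ℝ} (ht : 0 ≤ t) : |⟪β, t • z⟫| = t * |⟪β, z⟫| := by
  rw [inner_smul_right, abs_mul, abs_of_nonneg ht]

namespace HOData

variable (D : HOData V)

lemma reflection_mem_weylGroup {α : V} (hα : α ∈ D.R) : (ℝ ∙ α)ᗮ.reflection ∈ weylGroup D :=
  Subgroup.subset_closure ⟨α, hα, fun x => (rRefl_eq_reflection α x).symm⟩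

lemma weylGroup_invariant {S : Type*} {P : V → S} (h : ∀ α ∈ D.R, ∀ z, P (rRefl α z) = P z)
    (w : weylGroup D) (z : V) : P (w.1 z) = P z := by
  obtain ⟨w, hw⟩ := w
  change P (w z) = P z
  induction hw using Subgroup.closure_induction generalizing z with
  | mem w hw =>
    obtain ⟨α, hα, hw⟩ := hw
    rw [hw, h α hα]
  | one => rfl
  | mul v w _ _ hv hw => exact (hv (w z)).trans (hw z)
  | inv w _ hw => exact (hw (w⁻¹ z)).symm.trans (congrArg P (w.apply_symm_apply z))

lemma regular_weyl (w : weylGroup D) {z : V} (hz : HORegular D z) : HORegular D (w.1 z) := by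
  rwa [D.weylGroup_invariant (P := HORegular D) fun α hα y => propext
    ⟨fun hy => by simpa only [rRefl_rRefl] using D.regular_rRefl hα hy, D.regular_rRefl hα⟩]

lemma k_pos_of_pos {α : V} (hα : α ∈ D.Rpos) : 0 < D.k α := D.k_pos α (D.pos_subset hα)

lemma abs_inner_pos {α z : V} (hα : α ∈ D.Rpos) (hz : HORegular D z) : 0 < |⟪α, z⟫| :=
  abs_pos.2 (hz α (D.pos_subset hα))

/-- The operator governing the radial derivative of the rescaled Opdam function: on regular
points `f = D.rescaled G` satisfies `∂f/∂r = L f` along rays, with `L = D.radialOp` and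
`∂/∂r` the derivative of `t ↦ f (t • z)` at `t = 1`. -/
def radialOp (f : V → ℝ) (z : V) : ℝ :=
  ∑ α ∈ D.Rpos, D.k α * (max ⟪α, z⟫ 0 * f (rRefl α z) +
    bernoulliKernel |⟪α, z⟫| * (f (rRefl α z) - f z))

lemma neg_mul_le_radialOp {f : V → ℝ} {z : V} (hz : HORegular D z) (h : 0 ≤ f z)
    (hr : ∀ α ∈ D.Rpos, 0 ≤ f (rRefl α z)) :
    -((∑ α ∈ D.Rpos, D.k α) * f z) ≤ D.radialOp f z := by
  rw [Finset.sum_mul, ← Finset.sum_neg_distrib]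
  refine Finset.sum_le_sum fun α hα => ?_
  have hs := D.abs_inner_pos hα hz
  have hkernel : bernoulliKernel |⟪α, z⟫| * f z ≤ 1 * f z :=
    mul_le_mul_of_nonneg_right (bernoulliKernel_le_one hs) h
  have hkernel' := mul_nonneg (bernoulliKernel_pos hs).le (hr α hα)
  have hmax := mul_nonneg (le_max_right ⟪α, z⟫ 0) (hr α hα)
  rw [← mul_neg]
  exact mul_le_mul_of_nonneg_left (by linarith) (D.k_pos_of_pos hα).le

/-- Continuous functions whose radial derivative is at least `radialOp` at regular points. -/
def IsSupersolution (f : V → ℝ) : Prop :=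
  Continuous f ∧ ∀ z, HORegular D z → ∃ v, HasRadialDerivAt f v z ∧ D.radialOp f z ≤ v

/-- Continuous functions whose radial derivative is at most `radialOp` at regular points. -/
def IsSubsolution (f : V → ℝ) : Prop :=
  Continuous f ∧ ∀ z, HORegular D z → ∃ v, HasRadialDerivAt f v z ∧ v ≤ D.radialOp f z

lemma radialOp_const_mul (c : ℝ) (f : V → ℝ) (z : V) :
    D.radialOp (fun y => c * f y) z = c * D.radialOp f z := by
  simp only [radialOp, Finset.mul_sum]
  exact Finset.sum_congr rfl fun _ _ => by ring

lemma radialOp_sub (f g : V → ℝ) (z : V) :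
    D.radialOp (fun y => f y - g y) z = D.radialOp f z - D.radialOp g z := by
  simp only [radialOp, ← Finset.sum_sub_distrib]
  exact Finset.sum_congr rfl fun _ _ => by ring

variable {D}

lemma IsSupersolution.const_mul {f : V → ℝ} (hf : D.IsSupersolution f) {c : ℝ} (hc : 0 ≤ c) :
    D.IsSupersolution fun z => c * f z := by
  refine ⟨hf.1.const_mul c, fun z hz => ?_⟩
  obtain ⟨v, hv, hL⟩ := hf.2 z hz
  exact ⟨c * v, HasDerivAt.const_mul c hv,
    D.radialOp_const_mul c f z ▸ mul_le_mul_of_nonneg_left hL hc⟩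

lemma IsSubsolution.const_mul {f : V → ℝ} (hf : D.IsSubsolution f) {c : ℝ} (hc : 0 ≤ c) :
    D.IsSubsolution fun z => c * f z := by
  refine ⟨hf.1.const_mul c, fun z hz => ?_⟩
  obtain ⟨v, hv, hL⟩ := hf.2 z hz
  exact ⟨c * v, HasDerivAt.const_mul c hv,
    D.radialOp_const_mul c f z ▸ mul_le_mul_of_nonneg_left hL hc⟩

lemma IsSupersolution.sub {f g : V → ℝ} (hg : D.IsSupersolution g) (hf : D.IsSubsolution f) :
    D.IsSupersolution fun z => g z - f z := by
  refine ⟨hg.1.sub hf.1, fun z hz => ?_⟩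
  obtain ⟨v, hv, hgL⟩ := hg.2 z hz
  obtain ⟨w, hw, hfL⟩ := hf.2 z hz
  exact ⟨v - w, HasDerivAt.sub hv hw, D.radialOp_sub g f z ▸ sub_le_sub hgL hfL⟩

lemma IsSupersolution.pos [Finite (weylGroup D)] {f : V → ℝ} (hf : D.IsSupersolution f)
    (h0 : 0 < f 0) {z : V} (hz : HORegular D z) : 0 < f z := by
  obtain ⟨hcont, hf⟩ := hf
  choose! f' hd hL using hf
  have key := pos_of_cooperative (ι := weylGroup D) (K := ∑ α ∈ D.Rpos, D.k α)
    (f := fun w t => f (t • w.1 z)) (f' := fun w t => f' (t • w.1 z) / t)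
    (fun w => ?_) (fun w t ht => ?_) (fun t ht hnonneg w => ?_) 1 one_pos
  · simpa using key
  · have hray : Continuous fun t : ℝ => f (t • w.1 z) := by fun_prop
    exact (hray.continuousAt.eventually (lt_mem_nhds (by simpa using h0))).filter_mono
      nhdsWithin_le_nhds
  · exact (hd _ (D.regular_smul ht.ne' (D.regular_weyl w hz))).hasDerivAt ht.ne'
  · have hreg := D.regular_smul ht.ne' (D.regular_weyl w hz)
    have hreflect : ∀ α ∈ D.Rpos, 0 ≤ f (rRefl α (t • w.1 z)) := fun α hα => by
      rw [rRefl_smul, rRefl_eq_reflection]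
      exact hnonneg (⟨_, D.reflection_mem_weylGroup (D.pos_subset hα)⟩ * w)
    rw [mul_div_cancel₀ _ ht.ne']
    exact (D.neg_mul_le_radialOp hreg (hnonneg w) hreflect).trans (hL _ hreg)

lemma IsSubsolution.lt [Finite (weylGroup D)] {f g : V → ℝ} (hf : D.IsSubsolution f)
    (hg : D.IsSupersolution g) (h0 : f 0 < g 0) {z : V} (hz : HORegular D z) : f z < g z :=
  sub_pos.1 ((hg.sub hf).pos (sub_pos.2 h0) hz)

variable (D)

/-! ### The rescaled Opdam function -/

/-- `½ ∑_{α > 0} k_α |(α, z)|`, the Weyl-invariant extension of `z ↦ (ρ, z)` from the closed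
positive chamber; written as a sum over all roots so that the invariance is visible. -/
def absRho (z : V) : ℝ := 4⁻¹ * ∑ γ ∈ D.R, D.k γ * |⟪γ, z⟫|

/-- The Opdam function with its exponential decay removed. -/
def rescaled (G : V → ℝ) (z : V) : ℝ := Real.exp (D.absRho z) * G z

lemma absRho_rRefl {α : V} (hα : α ∈ D.R) (z : V) : D.absRho (rRefl α z) = D.absRho z := by
  rw [absRho, absRho, ← D.sum_rRefl hα (fun γ => D.k γ * |⟪γ, z⟫|)]
  congr 1
  exact Finset.sum_congr rfl fun γ hγ => by rw [inner_rRefl, D.k_inv α hα γ hγ]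

lemma absRho_eq (z : V) : D.absRho z = ∑ α ∈ D.Rpos, 2⁻¹ * (D.k α * |⟪α, z⟫|) := by
  rw [absRho, D.sum_eq_two_mul_sum_pos fun α hα => by rw [D.k_neg hα, inner_neg_left, abs_neg],
    ← Finset.mul_sum]
  ring

lemma absRho_smul {t : ℝ} (ht : 0 ≤ t) (z : V) : D.absRho (t • z) = t * D.absRho z := by
  simp only [absRho, abs_inner_smul _ _ ht, Finset.mul_sum]
  exact Finset.sum_congr rfl fun _ _ => by ring

lemma inner_rhoHO (z : V) : ⟪rhoHO D, z⟫ = ∑ α ∈ D.Rpos, 2⁻¹ * (D.k α * ⟪α, z⟫) := by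
  simp only [rhoHO, inner_smul_left, sum_inner, RCLike.conj_to_real, Finset.mul_sum]

lemma continuous_absRho : Continuous D.absRho := by
  unfold absRho
  fun_prop

lemma rescaled_rRefl {α : V} (hα : α ∈ D.R) (G : V → ℝ) (z : V) :
    D.rescaled G (rRefl α z) = Real.exp (D.absRho z) * G (rRefl α z) := by
  rw [rescaled, D.absRho_rRefl hα]

lemma radialOp_rescaled {G : V → ℝ} (hG : IsOpdamR D 0 G) {z : V} (hz : HORegular D z) :
    D.radialOp (D.rescaled G) z =
      Real.exp (D.absRho z) * (D.absRho z * G z + fderiv ℝ G z z) := by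
  rw [hG.2.2 z z hz, add_zero, D.inner_rhoHO, D.absRho_eq, Finset.sum_mul, Finset.sum_mul,
    ← Finset.sum_add_distrib, ← Finset.sum_add_distrib, ← D.absRho_eq, Finset.mul_sum, radialOp]
  refine Finset.sum_congr rfl fun α hα => ?_
  rw [D.rescaled_rRefl (D.pos_subset hα), rescaled, mul_div_assoc,
    div_one_sub_exp_neg (hz α (D.pos_subset hα))]
  have habs : |⟪α, z⟫| = 2 * max ⟪α, z⟫ 0 - ⟪α, z⟫ := by
    rcases le_total 0 ⟪α, z⟫ with h | h
    · rw [max_eq_left h, abs_of_nonneg h]; ring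
    · rw [max_eq_right h, abs_of_nonpos h]; ring
  generalize bernoulliKernel |⟪α, z⟫| = b
  rw [habs]
  ring

lemma hasRadialDerivAt_rescaled {G : V → ℝ} (hG : IsOpdamR D 0 G) {z : V}
    (hz : HORegular D z) :
    HasRadialDerivAt (D.rescaled G) (D.radialOp (D.rescaled G) z) z := by
  have hrho : HasRadialDerivAt D.absRho (D.absRho z) z :=
    hasRadialDerivAt_of_homogeneous fun t ht => D.absRho_smul ht.le z
  have hdiff : DifferentiableAt ℝ G z := (hG.1 z (Set.mem_univ z)).differentiableAt
  refine (hrho.exp.mul (hasRadialDerivAt_of_differentiableAt hdiff)).congr_deriv ?_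
  rw [D.radialOp_rescaled hG hz]
  simp only [one_smul]
  ring

lemma rescaled_zero {G : V → ℝ} (hG : IsOpdamR D 0 G) : D.rescaled G 0 = 1 := by
  simp [rescaled, absRho, hG.2.1]

lemma continuous_rescaled {G : V → ℝ} (hG : IsOpdamR D 0 G) : Continuous (D.rescaled G) :=
  (Real.continuous_exp.comp D.continuous_absRho).mul (continuousOn_univ.1 hG.1.continuousOn)

lemma isSubsolution_rescaled {G : V → ℝ} (hG : IsOpdamR D 0 G) :
    D.IsSubsolution (D.rescaled G) :=
  ⟨D.continuous_rescaled hG, fun _ hz => ⟨_, D.hasRadialDerivAt_rescaled hG hz, le_rfl⟩⟩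

lemma isSupersolution_rescaled {G : V → ℝ} (hG : IsOpdamR D 0 G) :
    D.IsSupersolution (D.rescaled G) :=
  ⟨D.continuous_rescaled hG, fun _ hz => ⟨_, D.hasRadialDerivAt_rescaled hG hz, le_rfl⟩⟩

end HOData

/-! ### Barriers -/

lemma exists_bernoulliKernel_mul_pow_sub_one_le {a : ℝ} (ha : 0 ≤ a) (N : ℕ) :
    ∃ C : ℝ, 0 ≤ C ∧ ∀ s : ℝ, 0 < s →
      bernoulliKernel s * ((1 + a * s) ^ N - 1) ≤ C * (s / (1 + s) ^ 2) := by
  obtain ⟨C, hC, hkernel⟩ := exists_bernoulliKernel_mul_pow_le (N - 1 + 2)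
  refine ⟨a * N * (1 + a) ^ (N - 1) * C, by positivity, fun s hs => ?_⟩
  have hpow : (1 + a * s) ^ N - 1 ≤ a * s * N * ((1 + a) * (1 + s)) ^ (N - 1) := by
    have hbinom := (le_abs_self _).trans (abs_pow_sub_pow_le (1 + a * s) 1 N)
    rw [one_pow, add_sub_cancel_left, abs_of_nonneg (by positivity), abs_one,
      abs_of_nonneg (by positivity), max_eq_left (by linarith [mul_nonneg ha hs.le])] at hbinom
    refine hbinom.trans ?_
    gcongr
    nlinarith
  calc bernoulliKernel s * ((1 + a * s) ^ N - 1)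
      ≤ bernoulliKernel s * (a * s * N * ((1 + a) * (1 + s)) ^ (N - 1)) :=
        mul_le_mul_of_nonneg_left hpow (bernoulliKernel_pos hs).le
    _ = a * N * (1 + a) ^ (N - 1) * (bernoulliKernel s * (1 + s) ^ (N - 1 + 2)) *
          (s / (1 + s) ^ 2) := by
        rw [mul_pow, pow_add]
        field_simp
    _ ≤ a * N * (1 + a) ^ (N - 1) * C * (s / (1 + s) ^ 2) := by
        gcongr
        exact hkernel s hs

namespace HOData

variable (D : HOData V)

/-- The sum of `1 / (1 + |(γ, z)|)` over all roots, a bounded Weyl-invariant function whose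
radial derivative absorbs the contributions of `bernoulliKernel`. -/
def invSum (z : V) : ℝ := ∑ γ ∈ D.R, (1 + |⟪γ, z⟫|)⁻¹

/-- Minus the radial derivative of `invSum`. -/
def invSumDecay (z : V) : ℝ := ∑ γ ∈ D.R, |⟪γ, z⟫| / (1 + |⟪γ, z⟫|) ^ 2

/-- The radial logarithmic derivative of `theta`. -/
def thetaLogDeriv (A : ℝ) (z : V) : ℝ :=
  ∑ β ∈ Rpos0 D, A * max ⟪β, z⟫ 0 / (1 + A * max ⟪β, z⟫ 0)

/-- The barriers compared with the rescaled Opdam function: supersolutions for large `A` and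
negative `B`, subsolutions for small `A` and positive `B`. -/
def barrier (A B : ℝ) (z : V) : ℝ := D.theta A z * Real.exp (B * D.invSum z)

/-- The factor by which the reference product changes under a reflection. -/
def thetaRatio (A : ℝ) (α z : V) : ℝ := D.theta A (rRefl α z) / D.theta A z

lemma hasRadialDerivAt_theta {A : ℝ} (hA : 0 ≤ A) (z : V) :
    HasRadialDerivAt (D.theta A) (D.theta A z * D.thetaLogDeriv A z) z := by
  have hfactor (β : V) :
      HasDerivAt (fun t : ℝ => 1 + A * max ⟪β, t • z⟫ 0) (A * max ⟪β, z⟫ 0) 1 :=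
    ((hasRadialDerivAt_of_homogeneous (f := fun z => max ⟪β, z⟫ 0)
      fun t ht => max_inner_smul β z ht.le).const_mul A).const_add 1
  refine (HasDerivAt.fun_finsetProd fun β _ => hfactor β).congr_deriv ?_
  rw [thetaLogDeriv, Finset.mul_sum]
  refine Finset.sum_congr rfl fun β hβ => ?_
  have hβ0 : 1 + A * max ⟪β, z⟫ 0 ≠ 0 := by positivity
  rw [theta, ← Finset.mul_prod_erase _ _ hβ, smul_eq_mul]
  simp only [one_smul]
  field_simp

lemma hasRadialDerivAt_invSum (z : V) : HasRadialDerivAt D.invSum (-D.invSumDecay z) z := by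
  rw [invSumDecay, ← Finset.sum_neg_distrib]
  refine HasDerivAt.fun_sum fun γ _ => ?_
  have habs : HasDerivAt (fun t : ℝ => |⟪γ, t • z⟫|) |⟪γ, z⟫| 1 :=
    hasRadialDerivAt_of_homogeneous (f := fun z => |⟪γ, z⟫|)
      fun t ht => abs_inner_smul γ z ht.le
  refine ((habs.const_add 1).fun_inv (by positivity)).congr_deriv ?_
  rw [one_smul, neg_div]

lemma hasRadialDerivAt_barrier {A : ℝ} (hA : 0 ≤ A) (B : ℝ) (z : V) :
    HasRadialDerivAt (D.barrier A B)
      (D.barrier A B z * (D.thetaLogDeriv A z - B * D.invSumDecay z)) z := by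
  refine ((D.hasRadialDerivAt_theta hA z).mul
    ((D.hasRadialDerivAt_invSum z).const_mul B).exp).congr_deriv ?_
  simp only [one_smul, barrier]
  ring

lemma invSum_nonneg (z : V) : 0 ≤ D.invSum z := Finset.sum_nonneg fun _ _ => by positivity

lemma invSum_rRefl {α : V} (hα : α ∈ D.R) (z : V) : D.invSum (rRefl α z) = D.invSum z := by
  rw [invSum, invSum, ← D.sum_rRefl hα (fun γ => (1 + |⟪γ, z⟫|)⁻¹)]
  exact Finset.sum_congr rfl fun γ _ => by rw [inner_rRefl]

lemma barrier_rRefl {α : V} (hα : α ∈ D.R) {A : ℝ} (hA : 0 ≤ A) (B : ℝ) (z : V) :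
    D.barrier A B (rRefl α z) = D.barrier A B z * D.thetaRatio A α z := by
  have := (D.theta_pos hA z).ne'
  rw [barrier, barrier, D.invSum_rRefl hα, thetaRatio]
  field_simp

lemma barrier_pos {A : ℝ} (hA : 0 ≤ A) (B : ℝ) (z : V) : 0 < D.barrier A B z :=
  mul_pos (D.theta_pos hA z) (Real.exp_pos _)

lemma continuous_barrier (A B : ℝ) : Continuous (D.barrier A B) := by
  have htheta : Continuous (D.theta A) := by
    unfold theta
    fun_prop
  have hinvSum : Continuous D.invSum :=
    continuous_finsetSum _ fun γ _ => Continuous.inv₀ (by fun_prop) fun z => by positivity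
  exact htheta.mul (Real.continuous_exp.comp (hinvSum.const_mul B))

lemma barrier_zero (A B : ℝ) : D.barrier A B 0 = Real.exp (B * D.R.card) := by
  simp [barrier, theta, invSum]

lemma thetaRatio_pos {A : ℝ} (hA : 0 ≤ A) (α z : V) : 0 < D.thetaRatio A α z :=
  div_pos (D.theta_pos hA _) (D.theta_pos hA _)

lemma radialOp_barrier {A : ℝ} (hA : 0 ≤ A) (B : ℝ) (z : V) :
    D.radialOp (D.barrier A B) z = D.barrier A B z *
      (∑ α ∈ D.Rpos, D.k α * (max ⟪α, z⟫ 0 * D.thetaRatio A α z) +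
        ∑ α ∈ D.Rpos, D.k α * (bernoulliKernel |⟪α, z⟫| * (D.thetaRatio A α z - 1))) := by
  rw [radialOp, ← Finset.sum_add_distrib, Finset.mul_sum]
  refine Finset.sum_congr rfl fun α hα => ?_
  rw [D.barrier_rRefl (D.pos_subset hα) hA]
  ring

lemma exists_abs_thetaRatio_sub_one_le : ∃ c : ℝ, 0 ≤ c ∧ ∀ A : ℝ, 0 ≤ A → ∀ α ∈ D.R, ∀ z : V,
    |D.thetaRatio A α z - 1| ≤ (1 + A * c * |⟪α, z⟫|) ^ (Rpos0 D).card - 1 := by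
  obtain ⟨c, hc, hθ⟩ := D.exists_theta_rRefl_le
  refine ⟨c, hc, fun A hA α hα z => ?_⟩
  have hz := D.theta_pos hA z
  have hupper := hθ A hA α hα z
  have hlower := hθ A hA α hα (rRefl α z)
  rw [rRefl_rRefl, inner_rRefl, rRefl_self, inner_neg_left, abs_neg] at hlower
  have hone : 1 ≤ (1 + A * c * |⟪α, z⟫|) ^ (Rpos0 D).card :=
    one_le_pow₀ (le_add_of_nonneg_right (by positivity))
  set q := (1 + A * c * |⟪α, z⟫|) ^ (Rpos0 D).card
  set r := D.thetaRatio A α z with hr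
  have : 0 < r := D.thetaRatio_pos hA α z
  have hrq : r ≤ q := (div_le_iff₀ hz).2 hupper
  have hqr : 1 ≤ q * r := by rwa [hr, thetaRatio, ← mul_div_assoc, one_le_div hz]
  rw [abs_le]
  exact ⟨by nlinarith [mul_nonneg (sub_nonneg.2 hone) (sub_nonneg.2 hrq)], by linarith⟩

lemma exists_abs_sum_bernoulliKernel_mul_thetaRatio_le {A : ℝ} (hA : 0 ≤ A) :
    ∃ B : ℝ, 0 ≤ B ∧ ∀ z, HORegular D z →
      |∑ α ∈ D.Rpos, D.k α * (bernoulliKernel |⟪α, z⟫| * (D.thetaRatio A α z - 1))|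
        ≤ B * D.invSumDecay z := by
  obtain ⟨c, hc, hratio⟩ := D.exists_abs_thetaRatio_sub_one_le
  obtain ⟨C, hC, hkernel⟩ :=
    exists_bernoulliKernel_mul_pow_sub_one_le (mul_nonneg hA hc) (Rpos0 D).card
  refine ⟨∑ α ∈ D.Rpos, D.k α * C,
    Finset.sum_nonneg fun α hα => mul_nonneg (D.k_pos_of_pos hα).le hC, fun z hz => ?_⟩
  refine (Finset.abs_sum_le_sum_abs _ _).trans ?_
  rw [Finset.sum_mul]
  refine Finset.sum_le_sum fun α hα => ?_
  have hs := D.abs_inner_pos hα hz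
  have hterm : |⟪α, z⟫| / (1 + |⟪α, z⟫|) ^ 2 ≤ D.invSumDecay z :=
    Finset.single_le_sum (f := fun γ => |⟪γ, z⟫| / (1 + |⟪γ, z⟫|) ^ 2)
      (fun γ _ => by positivity) (D.pos_subset hα)
  rw [abs_mul, abs_of_pos (D.k_pos_of_pos hα), abs_mul, abs_of_pos (bernoulliKernel_pos hs),
    mul_assoc]
  refine mul_le_mul_of_nonneg_left ?_ (D.k_pos_of_pos hα).le
  calc bernoulliKernel |⟪α, z⟫| * |D.thetaRatio A α z - 1|
      ≤ bernoulliKernel |⟪α, z⟫| * ((1 + A * c * |⟪α, z⟫|) ^ (Rpos0 D).card - 1) :=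
        mul_le_mul_of_nonneg_left (hratio A hA α (D.pos_subset hα) z) (bernoulliKernel_pos hs).le
    _ ≤ C * (|⟪α, z⟫| / (1 + |⟪α, z⟫|) ^ 2) := hkernel _ hs
    _ ≤ C * D.invSumDecay z := by gcongr

lemma thetaLogDeriv_nonneg {A : ℝ} (hA : 0 ≤ A) (z : V) : 0 ≤ D.thetaLogDeriv A z :=
  Finset.sum_nonneg fun _ _ => by positivity

lemma mul_max_mul_thetaRatio_le {A : ℝ} (hA : 0 ≤ A) {α : V} (hα : α ∈ D.Rpos) (z : V) :
    A * (max ⟪α, z⟫ 0 * D.thetaRatio A α z) ≤ 2 * D.thetaLogDeriv A z := by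
  rcases le_or_gt ⟪α, z⟫ 0 with h | h
  · rw [max_eq_right h, zero_mul, mul_zero]
    linarith [D.thetaLogDeriv_nonneg hA z]
  obtain ⟨β, hβ, -, hle⟩ := D.exists_indivisible hα
  have hβα := hle z h
  have hβz : 0 < ⟪β, z⟫ := by linarith
  have hratio : D.thetaRatio A α z ≤ 2 / (2 + A * ⟪α, z⟫) := by
    rw [thetaRatio, div_le_div_iff₀ (D.theta_pos hA z) (by positivity)]
    exact theta_rRefl_mul_le hα h hA
  have hsingle : A * max ⟪β, z⟫ 0 / (1 + A * max ⟪β, z⟫ 0) ≤ D.thetaLogDeriv A z :=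
    Finset.single_le_sum (f := fun β => A * max ⟪β, z⟫ 0 / (1 + A * max ⟪β, z⟫ 0))
      (fun _ _ => by positivity) hβ
  rw [max_eq_left hβz.le] at hsingle
  rw [max_eq_left h.le]
  calc A * (⟪α, z⟫ * D.thetaRatio A α z)
      ≤ A * (⟪α, z⟫ * (2 / (2 + A * ⟪α, z⟫))) := by gcongr
    _ = 2 * (A * ⟪α, z⟫ / (2 + A * ⟪α, z⟫)) := by ring
    _ ≤ 2 * (A * ⟪β, z⟫ / (1 + A * ⟪β, z⟫)) := by
        refine mul_le_mul_of_nonneg_left ?_ zero_le_two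
        rw [div_le_div_iff₀ (by positivity) (by positivity)]
        nlinarith [mul_le_mul_of_nonneg_left hβα hA]
    _ ≤ 2 * D.thetaLogDeriv A z := by gcongr

/-- For large `A` the terms `(α, z)⁺ θ(r_α z) / θ(z)` are small against the radial logarithmic
derivative of `θ`. -/
lemma exists_isSupersolution_barrier :
    ∃ A : ℝ, 1 ≤ A ∧ ∃ B : ℝ, 0 ≤ B ∧ D.IsSupersolution (D.barrier A (-B)) := by
  have hK : 0 ≤ ∑ α ∈ D.Rpos, D.k α := Finset.sum_nonneg fun α hα => (D.k_pos_of_pos hα).le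
  set K := ∑ α ∈ D.Rpos, D.k α with hKdef
  have hA : 0 < 1 + 2 * K := by positivity
  obtain ⟨B, hB, hkernel⟩ := D.exists_abs_sum_bernoulliKernel_mul_thetaRatio_le hA.le
  refine ⟨1 + 2 * K, by linarith, B, hB, D.continuous_barrier _ _, fun z hz =>
    ⟨_, D.hasRadialDerivAt_barrier hA.le _ z, ?_⟩⟩
  rw [D.radialOp_barrier hA.le]
  refine mul_le_mul_of_nonneg_left ?_ (D.barrier_pos hA.le _ z).le
  have hmain : (1 + 2 * K) *
      ∑ α ∈ D.Rpos, D.k α * (max ⟪α, z⟫ 0 * D.thetaRatio (1 + 2 * K) α z) ≤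
      K * (2 * D.thetaLogDeriv (1 + 2 * K) z) := by
    rw [hKdef, Finset.sum_mul, Finset.mul_sum, ← hKdef]
    refine Finset.sum_le_sum fun α hα => ?_
    rw [mul_left_comm]
    exact mul_le_mul_of_nonneg_left (D.mul_max_mul_thetaRatio_le hA.le hα z)
      (D.k_pos_of_pos hα).le
  have hsum : ∑ α ∈ D.Rpos, D.k α * (max ⟪α, z⟫ 0 * D.thetaRatio (1 + 2 * K) α z) ≤
      D.thetaLogDeriv (1 + 2 * K) z :=
    le_of_mul_le_mul_left (by linarith [D.thetaLogDeriv_nonneg hA.le z]) hA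
  linarith [le_of_abs_le (hkernel z hz)]

lemma exists_pos_le_k : ∃ κ : ℝ, 0 < κ ∧ ∀ α ∈ D.R, κ ≤ D.k α := by
  rcases D.R.eq_empty_or_nonempty with h | h
  · exact ⟨1, one_pos, by simp [h]⟩
  · obtain ⟨α, hα, hmin⟩ := D.R.exists_min_image D.k h
    exact ⟨D.k α, D.k_pos α hα, hmin⟩

lemma mul_thetaLogDeriv_le {a c : ℝ} (ha : 0 ≤ a) (hc : 0 < c) (hc1 : c ≤ 1) {α z : V}
    (hα : 0 < ⟪α, z⟫) (hle : ∀ β ∈ D.Rpos, c * ⟪β, z⟫ ≤ ⟪α, z⟫) :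
    c * D.thetaLogDeriv a z ≤ (Rpos0 D).card * (a * ⟪α, z⟫ / (1 + a * ⟪α, z⟫)) := by
  rw [thetaLogDeriv, Finset.mul_sum, ← nsmul_eq_mul, ← Finset.sum_const]
  refine Finset.sum_le_sum fun β hβ => ?_
  have hmax : c * max ⟪β, z⟫ 0 ≤ ⟪α, z⟫ := by
    rw [mul_max_of_nonneg _ _ hc.le, mul_zero]
    exact max_le (hle β (D.pos_of_mem_Rpos0 hβ)) hα.le
  have hpos : 0 ≤ max ⟪β, z⟫ 0 := le_max_right _ _
  generalize max ⟪β, z⟫ 0 = m at hmax hpos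
  rw [← mul_div_assoc, div_le_div_iff₀ (by positivity) (by positivity)]
  have hprod : c * (a * a * ⟪α, z⟫ * m) ≤ 1 * (a * a * ⟪α, z⟫ * m) := by gcongr
  linarith [mul_le_mul_of_nonneg_left hmax ha]

/-- Among the terms `(α, z)⁺ θ(r_α z) / θ(z)`, a single one, for a dominant indecomposable root,
already controls the radial logarithmic derivative of `θ` when `a` is small. -/
lemma exists_thetaLogDeriv_le : ∃ a : ℝ, 0 < a ∧ a ≤ 1 ∧ ∀ z : V,
    D.thetaLogDeriv a z ≤ ∑ α ∈ D.Rpos, D.k α * (max ⟪α, z⟫ 0 * D.thetaRatio a α z) := by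
  obtain ⟨κ, hκ, hk⟩ := D.exists_pos_le_k
  obtain ⟨c, hc, hc1, hdom⟩ := D.exists_indecomposable_dominant
  set N := (Rpos0 D).card
  set a := min 1 (c * κ / (N + 1)) with hadef
  have ha : 0 < a := lt_min one_pos (by positivity)
  have haN : N * a ≤ c * κ := by
    have : a * (N + 1) ≤ c * κ :=
      (le_div_iff₀ (by positivity)).1 (min_le_right (1 : ℝ) (c * κ / (N + 1)))
    linarith
  refine ⟨a, ha, min_le_left _ _, fun z => ?_⟩
  have hnonneg : ∀ α ∈ D.Rpos, 0 ≤ D.k α * (max ⟪α, z⟫ 0 * D.thetaRatio a α z) := fun α hα =>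
    mul_nonneg (D.k_pos_of_pos hα).le
      (mul_nonneg (le_max_right _ _) (D.thetaRatio_pos ha.le α z).le)
  by_cases hex : ∃ β ∈ D.Rpos, 0 < ⟪β, z⟫
  · obtain ⟨α, hind, hα, hle⟩ := hdom z hex
    have hratio : D.thetaRatio a α z = 1 / (1 + a * ⟪α, z⟫) := by
      have : 0 < 1 + a * ⟪α, z⟫ := by positivity
      rw [thetaRatio, div_eq_div_iff (D.theta_pos ha.le z).ne' this.ne', one_mul,
        theta_rRefl_of_indecomposable hind hα]
    refine le_trans ?_ (Finset.single_le_sum hnonneg hind.1)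
    rw [hratio, max_eq_left hα.le]
    refine le_of_mul_le_mul_left ?_ hc
    calc c * D.thetaLogDeriv a z
        ≤ N * (a * ⟪α, z⟫ / (1 + a * ⟪α, z⟫)) := D.mul_thetaLogDeriv_le ha.le hc hc1 hα hle
      _ = N * a * (⟪α, z⟫ * (1 / (1 + a * ⟪α, z⟫))) := by ring
      _ ≤ c * κ * (⟪α, z⟫ * (1 / (1 + a * ⟪α, z⟫))) := by gcongr
      _ ≤ c * D.k α * (⟪α, z⟫ * (1 / (1 + a * ⟪α, z⟫))) := by
          gcongr
          exact hk α (D.pos_subset hind.1)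
      _ = c * (D.k α * (⟪α, z⟫ * (1 / (1 + a * ⟪α, z⟫)))) := by ring
  · push Not at hex
    have hzero : D.thetaLogDeriv a z = 0 := Finset.sum_eq_zero fun β hβ => by
      rw [max_eq_right (hex β (D.pos_of_mem_Rpos0 hβ)), mul_zero, zero_div]
    exact hzero ▸ Finset.sum_nonneg hnonneg

lemma exists_isSubsolution_barrier :
    ∃ a : ℝ, 0 < a ∧ a ≤ 1 ∧ ∃ B : ℝ, 0 ≤ B ∧ D.IsSubsolution (D.barrier a B) := by
  obtain ⟨a, ha, ha1, hmain⟩ := D.exists_thetaLogDeriv_le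
  obtain ⟨B, hB, hkernel⟩ := D.exists_abs_sum_bernoulliKernel_mul_thetaRatio_le ha.le
  refine ⟨a, ha, ha1, B, hB, D.continuous_barrier _ _, fun z hz =>
    ⟨_, D.hasRadialDerivAt_barrier ha.le _ z, ?_⟩⟩
  rw [D.radialOp_barrier ha.le]
  exact mul_le_mul_of_nonneg_left (by linarith [hmain z, neg_le_of_abs_le (hkernel z hz)])
    (D.barrier_pos ha.le _ z).le

/-! ### Sharp two-sided estimate -/

lemma theta_le_pow_mul {A : ℝ} (hA : 1 ≤ A) (z : V) :
    D.theta A z ≤ A ^ (Rpos0 D).card * D.theta 1 z := by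
  rw [theta, theta, ← Finset.prod_const, ← Finset.prod_mul_distrib]
  exact Finset.prod_le_prod (fun β _ => by positivity) fun β _ => by linarith

lemma pow_mul_theta_le {a : ℝ} (ha : 0 ≤ a) (ha1 : a ≤ 1) (z : V) :
    a ^ (Rpos0 D).card * D.theta 1 z ≤ D.theta a z := by
  rw [theta, theta, ← Finset.prod_const, ← Finset.prod_mul_distrib]
  exact Finset.prod_le_prod (fun β _ => by positivity) fun β _ => by linarith

lemma exists_rescaled_le [Finite (weylGroup D)] {G : V → ℝ} (hG : IsOpdamR D 0 G) :
    ∃ C : ℝ, 0 < C ∧ ∀ z, HORegular D z → D.rescaled G z ≤ C * D.theta 1 z := by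
  obtain ⟨A, hA, B, hB, hsuper⟩ := D.exists_isSupersolution_barrier
  have : 0 ≤ A := zero_le_one.trans hA
  set M := 2 * Real.exp (B * D.R.card) with hM
  refine ⟨M * A ^ (Rpos0 D).card, by positivity, fun z hz => ?_⟩
  have h0 : D.rescaled G 0 < M * D.barrier A (-B) 0 := by
    rw [D.rescaled_zero hG, D.barrier_zero, hM, mul_assoc, ← Real.exp_add]
    simp
  calc D.rescaled G z
      ≤ M * (D.theta A z * Real.exp (-B * D.invSum z)) :=
        ((D.isSubsolution_rescaled hG).lt (hsuper.const_mul (by positivity)) h0 hz).le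
    _ ≤ M * (A ^ (Rpos0 D).card * D.theta 1 z * 1) := by
        have := D.theta_pos zero_le_one z
        gcongr
        · exact D.theta_le_pow_mul hA z
        · exact Real.exp_le_one_iff.2 (by nlinarith [D.invSum_nonneg z])
    _ = M * A ^ (Rpos0 D).card * D.theta 1 z := by ring

lemma exists_le_rescaled [Finite (weylGroup D)] {G : V → ℝ} (hG : IsOpdamR D 0 G) :
    ∃ c : ℝ, 0 < c ∧ ∀ z, HORegular D z → c * D.theta 1 z ≤ D.rescaled G z := by
  obtain ⟨a, ha, ha1, B, hB, hsub⟩ := D.exists_isSubsolution_barrier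
  set M := 2⁻¹ * Real.exp (-B * D.R.card) with hM
  refine ⟨M * a ^ (Rpos0 D).card, by positivity, fun z hz => ?_⟩
  have h0 : M * D.barrier a B 0 < D.rescaled G 0 := by
    rw [D.rescaled_zero hG, D.barrier_zero, hM, mul_assoc, ← Real.exp_add, neg_mul,
      neg_add_cancel, Real.exp_zero]
    norm_num
  calc M * a ^ (Rpos0 D).card * D.theta 1 z
      = M * (a ^ (Rpos0 D).card * D.theta 1 z * 1) := by ring
    _ ≤ M * (D.theta a z * Real.exp (B * D.invSum z)) := by
        have := D.theta_pos ha.le z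
        gcongr
        · exact D.pow_mul_theta_le ha.le ha1 z
        · exact Real.one_le_exp (mul_nonneg hB (D.invSum_nonneg z))
    _ ≤ D.rescaled G z :=
        ((hsub.const_mul (by positivity)).lt (D.isSupersolution_rescaled hG) h0 hz).le

end HOData

/-! ### Radial asymptotics -/

/- The exact integral of the bound on `h'` over `[ε, 1]` is `b * (p + 1) * ε * (1 - ε)`. -/
lemma abs_le_of_abs_deriv_le {h h' : ℝ → ℝ} {a b p ε : ℝ} (ha : 0 ≤ a) (hb : 0 ≤ b)
    (hp : 0 ≤ p) (hε : 0 < ε) (hε1 : ε ≤ 1) (hd : ∀ t, 0 < t → HasDerivAt h (h' t) t)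
    (hh : |h ε| ≤ a * ε) (hh' : ∀ t ∈ Set.Ico ε 1, |h' t| ≤ b * (p * ε + ε ^ 2 / t ^ 2)) :
    |h 1| ≤ (a + b) * ((p + 1) * ε) := by
  let B : ℝ → ℝ := fun t => a * ε + b * (p * ε * (t - ε) + ε ^ 2 * (ε⁻¹ - t⁻¹))
  have hB (t : ℝ) (ht : 0 < t) : HasDerivAt B (b * (p * ε + ε ^ 2 / t ^ 2)) t := by
    have hlin : HasDerivAt (fun t => p * ε * (t - ε)) (p * ε * 1) t :=
      ((hasDerivAt_id t).sub_const ε).const_mul _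
    have hinv : HasDerivAt (fun t => ε ^ 2 * (ε⁻¹ - t⁻¹)) (ε ^ 2 * -(-(t ^ 2)⁻¹)) t :=
      ((hasDerivAt_inv ht.ne').const_sub ε⁻¹).const_mul _
    exact (((hlin.add hinv).const_mul b).const_add (a * ε)).congr_deriv (by ring)
  have hpos : ∀ t, ε ≤ t → 0 < t := fun t => hε.trans_le
  have hle : ‖h 1‖ ≤ B 1 := image_norm_le_of_norm_deriv_right_le_deriv_boundary'
    (fun t ht => (hd t (hpos t ht.1)).continuousAt.continuousWithinAt)
    (fun t ht => (hd t (hpos t ht.1)).hasDerivWithinAt) (by simpa [B] using hh)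
    (fun t ht => (hB t (hpos t ht.1)).continuousAt.continuousWithinAt)
    (fun t ht => (hB t (hpos t ht.1)).hasDerivWithinAt) hh' (Set.right_mem_Icc.2 hε1)
  calc |h 1| ≤ B 1 := hle
    _ = a * (1 * ε) + b * ((p + 1) * (ε * (1 - ε))) := by simp only [B]; field_simp
    _ ≤ a * ((p + 1) * ε) + b * ((p + 1) * (ε * 1)) := by gcongr <;> linarith
    _ = (a + b) * ((p + 1) * ε) := by ring

lemma div_add_div_sq_mul_pow_le {m t : ℝ} (hm : 0 < m) (ht : 0 < t) (ht1 : t ≤ 1) (p : ℕ) :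
    (p / (t * m) + 1 / (t * m) ^ 2) * t ^ (p + 1) ≤ (p * m⁻¹ + m⁻¹ ^ 2 / t ^ 2) * t := by
  have hpow : t ^ p ≤ 1 := pow_le_one₀ ht.le ht1
  have hpow' : p * t ^ p ≤ p * t := by
    rcases Nat.eq_zero_or_pos p with rfl | hp
    · simp
    · gcongr
      exact pow_le_of_le_one ht.le ht1 hp.ne'
  calc (p / (t * m) + 1 / (t * m) ^ 2) * t ^ (p + 1)
      = p * t ^ p * m⁻¹ + t ^ p * (m⁻¹ ^ 2 / t) := by field_simp; ring
    _ ≤ p * t * m⁻¹ + 1 * (m⁻¹ ^ 2 / t) := by gcongr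
    _ = (p * m⁻¹ + m⁻¹ ^ 2 / t ^ 2) * t := by field_simp

lemma inner_smul_pos_iff (γ z : V) {t : ℝ} (ht : 0 < t) : 0 < ⟪γ, t • z⟫ ↔ 0 < ⟪γ, z⟫ := by
  rw [inner_smul_right, mul_pos_iff_of_pos_left ht]

namespace HOData

section Separated

variable {D : HOData V} {m t : ℝ} {z : V}

lemma Separated.regular (hm : 0 < m) (h : D.Separated m z) : HORegular D z :=
  fun γ hγ => abs_pos.1 (hm.trans_le (h γ hγ))

lemma Separated.rRefl {α : V} (hα : α ∈ D.R) (h : D.Separated m z) :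
    D.Separated m (rRefl α z) := fun γ hγ => by
  rw [inner_rRefl]
  exact h _ (D.refl_mem α hα γ hγ)

lemma Separated.smul (ht : 0 ≤ t) (h : D.Separated m z) : D.Separated (t * m) (t • z) :=
  fun γ hγ => by
    rw [abs_inner_smul γ z ht]
    exact mul_le_mul_of_nonneg_left (h γ hγ) ht

lemma Separated.mono {m' : ℝ} (hm : m' ≤ m) (h : D.Separated m z) : D.Separated m' z :=
  fun γ hγ => hm.trans (h γ hγ)

lemma theta_smul_le (ht : 0 < t) (h : D.Separated 1 (t • z)) :
    D.theta 1 (t • z) ≤ 2 ^ (Rpos0 D).card * t ^ D.posCount z * D.theta 1 z := by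
  have hpow : t ^ D.posCount z = ∏ β ∈ Rpos0 D, if 0 < ⟪β, z⟫ then t else 1 := by
    rw [← Finset.prod_filter, Finset.prod_const, posCount]
  rw [hpow, theta, theta, ← Finset.prod_const, ← Finset.prod_mul_distrib,
    ← Finset.prod_mul_distrib]
  refine Finset.prod_le_prod (fun β _ => by positivity) fun β hβ => ?_
  have hsep := h β (D.pos_subset (D.pos_of_mem_Rpos0 hβ))
  rw [abs_inner_smul β z ht.le] at hsep
  rw [max_inner_smul β z ht.le]
  split_ifs with hβz
  · rw [abs_of_pos hβz] at hsep
    rw [max_eq_left hβz.le]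
    linarith
  · rw [max_eq_right (not_lt.1 hβz)]
    norm_num

end Separated

variable (D : HOData V)

lemma posCount_smul {t : ℝ} (ht : 0 < t) (z : V) : D.posCount (t • z) = D.posCount z := by
  simp only [posCount, inner_smul_pos_iff _ z ht]

lemma max_mul_theta_rRefl_le {α : V} (hα : α ∈ D.Rpos) (z : V) :
    max ⟪α, z⟫ 0 * D.theta 1 (rRefl α z) ≤ 2 * D.theta 1 z := by
  have hθ := D.theta_pos zero_le_one z
  have hθr := D.theta_pos zero_le_one (rRefl α z)
  rcases le_or_gt ⟪α, z⟫ 0 with h | h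
  · rw [max_eq_right h]
    linarith
  · rw [max_eq_left h.le]
    linarith [theta_rRefl_mul_le hα h zero_le_one]

lemma exists_kernel_mul_theta_le : ∃ C : ℝ, 0 ≤ C ∧ ∀ α ∈ D.Rpos, ∀ z, HORegular D z →
    bernoulliKernel |⟪α, z⟫| * (D.theta 1 (rRefl α z) + D.theta 1 z) * (1 + |⟪α, z⟫|) ^ 2 ≤
      C * D.theta 1 z := by
  obtain ⟨c, hc, hθ⟩ := D.exists_theta_rRefl_le
  set N := (Rpos0 D).card
  obtain ⟨C, hC, hkernel⟩ := exists_bernoulliKernel_mul_pow_le (N + 2)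
  refine ⟨2 * (1 + c) ^ N * C, by positivity, fun α hα z hz => ?_⟩
  have hs := D.abs_inner_pos hα hz
  have hθz := D.theta_pos zero_le_one z
  have hθα := hθ 1 zero_le_one α (D.pos_subset hα) z
  have hb := bernoulliKernel_pos hs
  have hbC := hkernel _ hs
  set s := |⟪α, z⟫|
  have hpow : (1 + 1 * c * s) ^ N ≤ (1 + c) ^ N * (1 + s) ^ N := by
    rw [← mul_pow]
    gcongr
    nlinarith
  have hone : 1 ≤ (1 + c) ^ N * (1 + s) ^ N := by
    rw [← mul_pow]
    exact one_le_pow₀ (by nlinarith)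
  have hsum : D.theta 1 (rRefl α z) + D.theta 1 z ≤
      2 * ((1 + c) ^ N * (1 + s) ^ N) * D.theta 1 z := by nlinarith
  calc bernoulliKernel s * (D.theta 1 (rRefl α z) + D.theta 1 z) * (1 + s) ^ 2
      ≤ bernoulliKernel s * (2 * ((1 + c) ^ N * (1 + s) ^ N) * D.theta 1 z) * (1 + s) ^ 2 := by
        gcongr
    _ = 2 * (1 + c) ^ N * (bernoulliKernel s * (1 + s) ^ (N + 2)) * D.theta 1 z := by ring
    _ ≤ 2 * (1 + c) ^ N * C * D.theta 1 z := by gcongr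

lemma abs_sum_k_mul_le {S : Finset V} (hS : S ⊆ D.Rpos) {g : V → ℝ} {M : ℝ} (hM : 0 ≤ M)
    (h : ∀ α ∈ S, |g α| ≤ M) : |∑ α ∈ S, D.k α * g α| ≤ (∑ α ∈ D.Rpos, D.k α) * M := by
  have hk : ∀ α ∈ D.Rpos, 0 ≤ D.k α := fun _ hα => (D.k_pos_of_pos hα).le
  calc |∑ α ∈ S, D.k α * g α| ≤ ∑ α ∈ S, |D.k α * g α| := Finset.abs_sum_le_sum_abs _ _
    _ ≤ ∑ α ∈ S, D.k α * M := Finset.sum_le_sum fun α hα => by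
        rw [abs_mul, abs_of_nonneg (hk α (hS hα))]
        exact mul_le_mul_of_nonneg_left (h α hα) (hk α (hS hα))
    _ = (∑ α ∈ S, D.k α) * M := (Finset.sum_mul ..).symm
    _ ≤ (∑ α ∈ D.Rpos, D.k α) * M := mul_le_mul_of_nonneg_right
        (Finset.sum_le_sum_of_subset_of_nonneg hS fun α hα _ => hk α hα) hM

lemma sum_k_nonneg : 0 ≤ ∑ α ∈ D.Rpos, D.k α :=
  Finset.sum_nonneg fun _ hα => (D.k_pos_of_pos hα).le

/-- The functions which are `O(θ₁)` on the regular points, with constant `A`. -/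
def IsThetaBounded (A : ℝ) (f : V → ℝ) : Prop :=
  0 ≤ A ∧ ∀ z, HORegular D z → |f z| ≤ A * D.theta 1 z

/-- The solutions of the radial equation satisfied by the rescaled Opdam function. -/
def IsRadialSolution (f : V → ℝ) : Prop :=
  ∀ z, HORegular D z → HasRadialDerivAt f (D.radialOp f z) z

/-- The positive roots at `z` whose reflections lower `posCount` by exactly one. -/
def descents (z : V) : Finset V :=
  D.Rpos.filter fun α => 0 < ⟪α, z⟫ ∧ D.posCount (rRefl α z) + 1 = D.posCount z

/-- The dominant part of the radial operator. -/
def leadingPart (f : V → ℝ) (z : V) : ℝ :=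
  ∑ α ∈ D.descents z, D.k α * (⟪α, z⟫ * f (rRefl α z))

/-- `L f = n f + O(θ₁ / m)` at the `m`-separated points with `posCount` equal to `n`, where
`L` is the radial operator. The error is written such that it is `O(θ₁ / m²)` for `n = 0`, which
makes it integrable along rays in the induction on `n`. -/
def IsAlmostEigen (n : ℕ) (f : V → ℝ) : Prop :=
  ∃ C : ℝ, 0 ≤ C ∧ ∀ m : ℝ, 1 ≤ m → ∀ z, D.Separated m z → D.posCount z = n →
    |D.radialOp f z - n * f z| ≤ C * (n / m + 1 / m ^ 2) * D.theta 1 z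

variable {D}
variable {f : V → ℝ} {A m : ℝ} {α z : V}

lemma mem_descents : α ∈ D.descents z ↔
    α ∈ D.Rpos ∧ 0 < ⟪α, z⟫ ∧ D.posCount (rRefl α z) + 1 = D.posCount z :=
  Finset.mem_filter

lemma descents_subset (z : V) : D.descents z ⊆ D.Rpos := Finset.filter_subset _ _

lemma descents_smul {t : ℝ} (ht : 0 < t) (z : V) : D.descents (t • z) = D.descents z := by
  ext α
  simp only [mem_descents, rRefl_smul, D.posCount_smul ht, inner_smul_pos_iff _ z ht]

lemma leadingPart_of_posCount_eq_zero (f : V → ℝ) (h : D.posCount z = 0) :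
    D.leadingPart f z = 0 := by
  have hempty : D.descents z = ∅ := Finset.eq_empty_of_forall_notMem fun α hα => by
    have := (mem_descents.1 hα).2.2
    omega
  rw [leadingPart, hempty, Finset.sum_empty]

lemma abs_leadingPart_le {c : ℝ} (hc : 0 ≤ c)
    (h : ∀ α ∈ D.descents z, |f (rRefl α z)| ≤ c * D.theta 1 (rRefl α z)) :
    |D.leadingPart f z| ≤ (∑ α ∈ D.Rpos, D.k α) * (2 * c * D.theta 1 z) := by
  have hθ := D.theta_pos zero_le_one z
  refine D.abs_sum_k_mul_le (descents_subset z) (by positivity) fun α hα => ?_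
  obtain ⟨hαpos, hαz, -⟩ := mem_descents.1 hα
  have hgain := D.max_mul_theta_rRefl_le hαpos z
  rw [max_eq_left hαz.le] at hgain
  calc |⟪α, z⟫ * f (rRefl α z)| = ⟪α, z⟫ * |f (rRefl α z)| := by rw [abs_mul, abs_of_pos hαz]
    _ ≤ ⟪α, z⟫ * (c * D.theta 1 (rRefl α z)) := by gcongr; exact h α hα
    _ = c * (⟪α, z⟫ * D.theta 1 (rRefl α z)) := by ring
    _ ≤ c * (2 * D.theta 1 z) := by gcongr
    _ = 2 * c * D.theta 1 z := by ring

lemma hasRadialDerivAt_leadingPart (hf : D.IsRadialSolution f) (hz : HORegular D z) :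
    HasRadialDerivAt (D.leadingPart f) (D.leadingPart (fun y => f y + D.radialOp f y) z) z := by
  have hsum : HasDerivAt
      (fun t : ℝ => ∑ α ∈ D.descents z, D.k α * ((t * ⟪α, z⟫) * f (t • rRefl α z)))
      (D.leadingPart (fun y => f y + D.radialOp f y) z) 1 := by
    refine HasDerivAt.fun_sum fun α hα => ?_
    have hreg := D.regular_rRefl (D.pos_subset (descents_subset z hα)) hz
    refine (((hasDerivAt_mul_const ⟪α, z⟫).mul (hf _ hreg)).const_mul (D.k α)).congr_deriv ?_
    rw [one_smul]
    ring
  refine hsum.congr_of_eventuallyEq ?_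
  filter_upwards [lt_mem_nhds (zero_lt_one (α := ℝ))] with t ht
  rw [leadingPart, descents_smul ht]
  exact Finset.sum_congr rfl fun α _ => by rw [rRefl_smul, inner_smul_right]

lemma IsThetaBounded.exists_abs_kernel_mul_le (hf : D.IsThetaBounded A f) :
    ∃ C : ℝ, 0 ≤ C ∧ ∀ α ∈ D.Rpos, ∀ z, HORegular D z →
      |bernoulliKernel |⟪α, z⟫| * (f (rRefl α z) - f z)| * (1 + |⟪α, z⟫|) ^ 2 ≤
        C * D.theta 1 z := by
  obtain ⟨C, hC, hkernel⟩ := D.exists_kernel_mul_theta_le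
  obtain ⟨hA, hf⟩ := hf
  refine ⟨A * C, by positivity, fun α hα z hz => ?_⟩
  have hb := bernoulliKernel_pos (D.abs_inner_pos hα hz)
  have hdiff : |f (rRefl α z) - f z| ≤ A * (D.theta 1 (rRefl α z) + D.theta 1 z) := by
    rw [mul_add]
    exact (abs_sub _ _).trans
      (add_le_add (hf _ (D.regular_rRefl (D.pos_subset hα) hz)) (hf z hz))
  calc |bernoulliKernel |⟪α, z⟫| * (f (rRefl α z) - f z)| * (1 + |⟪α, z⟫|) ^ 2
      ≤ bernoulliKernel |⟪α, z⟫| * (A * (D.theta 1 (rRefl α z) + D.theta 1 z)) *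
          (1 + |⟪α, z⟫|) ^ 2 := by
        rw [abs_mul, abs_of_pos hb]
        gcongr
    _ = A * (bernoulliKernel |⟪α, z⟫| * (D.theta 1 (rRefl α z) + D.theta 1 z) *
          (1 + |⟪α, z⟫|) ^ 2) := by ring
    _ ≤ A * (C * D.theta 1 z) := mul_le_mul_of_nonneg_left (hkernel α hα z hz) hA
    _ = A * C * D.theta 1 z := by ring

lemma IsThetaBounded.abs_max_mul_le (hf : D.IsThetaBounded A f) (hα : α ∈ D.Rpos)
    (hz : HORegular D z) : |max ⟪α, z⟫ 0 * f (rRefl α z)| ≤ 2 * A * D.theta 1 z := by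
  obtain ⟨hA, hf⟩ := hf
  calc |max ⟪α, z⟫ 0 * f (rRefl α z)| = max ⟪α, z⟫ 0 * |f (rRefl α z)| := by
        rw [abs_mul, abs_of_nonneg (le_max_right _ _)]
    _ ≤ max ⟪α, z⟫ 0 * (A * D.theta 1 (rRefl α z)) := by
        gcongr
        exact hf _ (D.regular_rRefl (D.pos_subset hα) hz)
    _ = A * (max ⟪α, z⟫ 0 * D.theta 1 (rRefl α z)) := by ring
    _ ≤ A * (2 * D.theta 1 z) :=
        mul_le_mul_of_nonneg_left (D.max_mul_theta_rRefl_le hα z) hA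
    _ = 2 * A * D.theta 1 z := by ring

lemma IsThetaBounded.exists_abs_radialOp_le (hf : D.IsThetaBounded A f) :
    ∃ C : ℝ, 0 ≤ C ∧ ∀ z, HORegular D z → |D.radialOp f z| ≤ C * D.theta 1 z := by
  obtain ⟨C, hC, hkernel⟩ := hf.exists_abs_kernel_mul_le
  have hK := D.sum_k_nonneg
  have hA := hf.1
  refine ⟨(∑ α ∈ D.Rpos, D.k α) * (2 * A + C), by positivity, fun z hz => ?_⟩
  have hθ := D.theta_pos zero_le_one z
  rw [mul_assoc, add_mul]
  refine D.abs_sum_k_mul_le subset_rfl (by positivity) fun α hα =>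
    (abs_add_le _ _).trans (add_le_add (hf.abs_max_mul_le hα hz) ?_)
  refine (le_mul_of_one_le_right (abs_nonneg _) (one_le_pow₀ ?_)).trans (hkernel α hα z hz)
  exact le_add_of_nonneg_right (abs_nonneg _)

lemma IsThetaBounded.abs_max_mul_le_of_notMem_descents (hf : D.IsThetaBounded A f)
    (hα : α ∈ D.Rpos) (hdesc : α ∉ D.descents z) (hm : 0 < m) (hsep : D.Separated m z) {p : ℕ}
    (hp : D.posCount z ≤ p + 1) :
    |max ⟪α, z⟫ 0 * f (rRefl α z)| ≤ 2 * A * (p / m) * D.theta 1 z := by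
  obtain ⟨hA, hf⟩ := hf
  have hθ := D.theta_pos zero_le_one z
  rcases le_or_gt ⟪α, z⟫ 0 with hαz | hαz
  · rw [max_eq_right hαz, zero_mul, abs_zero]
    positivity
  have hz := hsep.regular hm
  obtain ⟨htwo, hgain⟩ := (posCount_rRefl_add_one_or hz hα hαz).resolve_left
    fun h => hdesc (mem_descents.2 ⟨hα, hαz, h⟩)
  have hθr := D.theta_pos zero_le_one (rRefl α z)
  have hp1 : (1 : ℝ) ≤ p := by exact_mod_cast (by omega : 1 ≤ p)
  calc |max ⟪α, z⟫ 0 * f (rRefl α z)| = ⟪α, z⟫ * |f (rRefl α z)| := by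
        rw [max_eq_left hαz.le, abs_mul, abs_of_pos hαz]
    _ ≤ ⟪α, z⟫ * (A * D.theta 1 (rRefl α z)) := by
        gcongr
        exact hf _ (D.regular_rRefl (D.pos_subset hα) hz)
    _ = A * (1 / m) * (D.theta 1 (rRefl α z) * (0 + ⟪α, z⟫) * (0 + m)) := by field_simp; ring
    _ ≤ A * (1 / m) * (D.theta 1 (rRefl α z) * (2 + ⟪α, z⟫) * (1 + m)) := by gcongr <;> norm_num
    _ ≤ A * (p / m) * (2 * D.theta 1 z) :=
        mul_le_mul (by gcongr) (hgain m hm.le hsep) (by positivity) (by positivity)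
    _ = 2 * A * (p / m) * D.theta 1 z := by ring

lemma radialOp_sub_leadingPart (f : V → ℝ) (z : V) :
    D.radialOp f z - D.leadingPart f z = ∑ α ∈ D.Rpos, D.k α *
      ((if α ∈ D.descents z then 0 else max ⟪α, z⟫ 0 * f (rRefl α z)) +
        bernoulliKernel |⟪α, z⟫| * (f (rRefl α z) - f z)) := by
  rw [radialOp, leadingPart, ← Finset.inter_eq_right.2 (descents_subset z),
    ← Finset.sum_ite_mem, ← Finset.sum_sub_distrib, Finset.inter_eq_right.2 (descents_subset z)]
  refine Finset.sum_congr rfl fun α _ => ?_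
  split_ifs with h
  · rw [max_eq_left (mem_descents.1 h).2.1.le]
    ring
  · ring

lemma IsThetaBounded.exists_abs_radialOp_sub_leadingPart_le (hf : D.IsThetaBounded A f) :
    ∃ C : ℝ, 0 ≤ C ∧ ∀ (m : ℝ) (z : V) (p : ℕ), 0 < m → D.Separated m z →
      D.posCount z ≤ p + 1 →
      |D.radialOp f z - D.leadingPart f z| ≤ C * (p / m + 1 / m ^ 2) * D.theta 1 z := by
  obtain ⟨C, hC, hkernel⟩ := hf.exists_abs_kernel_mul_le
  have hK := D.sum_k_nonneg
  have hA := hf.1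
  refine ⟨(∑ α ∈ D.Rpos, D.k α) * (2 * A + C), by positivity, fun m z p hm hsep hp => ?_⟩
  have hθ := D.theta_pos zero_le_one z
  rw [radialOp_sub_leadingPart, mul_assoc, mul_assoc]
  refine D.abs_sum_k_mul_le subset_rfl (by positivity) fun α hα => ?_
  have hreflection : |if α ∈ D.descents z then 0 else max ⟪α, z⟫ 0 * f (rRefl α z)| ≤
      2 * A * (p / m) * D.theta 1 z := by
    split_ifs with h
    · rw [abs_zero]
      positivity
    · exact hf.abs_max_mul_le_of_notMem_descents hα h hm hsep hp
  have hdifference : |bernoulliKernel |⟪α, z⟫| * (f (rRefl α z) - f z)| ≤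
      C * (1 / m ^ 2) * D.theta 1 z := by
    rw [mul_one_div, div_mul_eq_mul_div, le_div_iff₀ (by positivity)]
    refine le_trans ?_ (hkernel α hα z (hsep.regular hm))
    gcongr
    linarith [hsep α (D.pos_subset hα)]
  have hslack : 0 ≤ (2 * A * (1 / m ^ 2) + C * (p / m)) * D.theta 1 z := by positivity
  linarith [abs_add_le (if α ∈ D.descents z then 0 else max ⟪α, z⟫ 0 * f (rRefl α z))
    (bernoulliKernel |⟪α, z⟫| * (f (rRefl α z) - f z))]

lemma abs_le_of_abs_radialDeriv_le {g g' : V → ℝ} {C₁ C₂ : ℝ} (hC₁ : 0 ≤ C₁) {p : ℕ}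
    (hd : ∀ z, HORegular D z → HasRadialDerivAt g (g' z) z) (hg : D.IsThetaBounded C₂ g)
    (hg' : ∀ m : ℝ, 1 ≤ m → ∀ z, D.Separated m z → D.posCount z = p + 1 →
      |g' z| ≤ C₁ * (p / m + 1 / m ^ 2) * D.theta 1 z)
    (hm : 1 ≤ m) (hsep : D.Separated m z) (hz : D.posCount z = p + 1) :
    |g z| ≤ 2 ^ (Rpos0 D).card * (C₂ + C₁) * ((p + 1) / m) * D.theta 1 z := by
  have hm0 : 0 < m := by linarith
  obtain ⟨hC₂, hg⟩ := hg
  set M := 2 ^ (Rpos0 D).card * D.theta 1 z with hM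
  have hM0 : 0 < M := by have := D.theta_pos zero_le_one z; positivity
  have hreg (t : ℝ) (ht : 0 < t) : HORegular D (t • z) :=
    D.regular_smul ht.ne' (hsep.regular hm0)
  have hone_le (t : ℝ) (ht : m⁻¹ ≤ t) : 1 ≤ t * m := (inv_le_iff_one_le_mul₀ hm0).1 ht
  have hθ (t : ℝ) (ht : m⁻¹ ≤ t) : D.theta 1 (t • z) ≤ M * t ^ (p + 1) := by
    have ht0 : 0 < t := (inv_pos.2 hm0).trans_le ht
    refine (theta_smul_le ht0 ((hsep.smul ht0.le).mono (hone_le t ht))).trans_eq ?_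
    rw [hz, hM]
    ring
  have hstart : |g (m⁻¹ • z)| ≤ C₂ * M * m⁻¹ := by
    rw [mul_assoc]
    refine (hg _ (hreg _ (inv_pos.2 hm0))).trans (mul_le_mul_of_nonneg_left ?_ hC₂)
    refine (hθ _ le_rfl).trans (mul_le_mul_of_nonneg_left ?_ hM0.le)
    exact pow_le_of_le_one (by positivity) (inv_le_one_of_one_le₀ hm) (Nat.succ_ne_zero p)
  have hderiv (t : ℝ) (ht : t ∈ Set.Ico m⁻¹ 1) :
      |g' (t • z) / t| ≤ C₁ * M * (p * m⁻¹ + m⁻¹ ^ 2 / t ^ 2) := by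
    have ht0 : 0 < t := (inv_pos.2 hm0).trans_le ht.1
    rw [abs_div, abs_of_pos ht0, div_le_iff₀ ht0]
    calc |g' (t • z)|
        ≤ C₁ * (p / (t * m) + 1 / (t * m) ^ 2) * D.theta 1 (t • z) :=
          hg' _ (hone_le t ht.1) _ (hsep.smul ht0.le) (by rw [D.posCount_smul ht0, hz])
      _ ≤ C₁ * (p / (t * m) + 1 / (t * m) ^ 2) * (M * t ^ (p + 1)) := by
          gcongr
          exact hθ t ht.1
      _ = C₁ * M * ((p / (t * m) + 1 / (t * m) ^ 2) * t ^ (p + 1)) := by ring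
      _ ≤ C₁ * M * ((p * m⁻¹ + m⁻¹ ^ 2 / t ^ 2) * t) := mul_le_mul_of_nonneg_left
          (div_add_div_sq_mul_pow_le hm0 ht0 ht.2.le p) (by positivity)
      _ = C₁ * M * (p * m⁻¹ + m⁻¹ ^ 2 / t ^ 2) * t := by ring
  have hend := abs_le_of_abs_deriv_le (h := fun t => g (t • z)) (by positivity) (by positivity)
    p.cast_nonneg (inv_pos.2 hm0) (inv_le_one_of_one_le₀ hm)
    (fun t ht => (hd _ (hreg t ht)).hasDerivAt ht.ne') hstart hderiv
  rw [one_smul] at hend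
  exact hend.trans_eq (by rw [hM]; ring)

lemma IsThetaBounded.isAlmostEigen_zero (hf : D.IsThetaBounded A f) : D.IsAlmostEigen 0 f := by
  obtain ⟨C, hC, hlead⟩ := hf.exists_abs_radialOp_sub_leadingPart_le
  refine ⟨C, hC, fun m hm z hsep hz => ?_⟩
  simpa [leadingPart_of_posCount_eq_zero f hz] using hlead m z 0 (by linarith) hsep (by omega)

lemma posCount_mul_radialOp_sub_leadingPart (f : V → ℝ) (p : ℝ) (z : V) :
    (p + 1) * D.radialOp f z - D.leadingPart (fun y => f y + D.radialOp f y) z =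
      (p + 1) * (D.radialOp f z - D.leadingPart f z) -
        D.leadingPart (fun y => D.radialOp f y - p * f y) z := by
  rw [mul_sub, sub_sub]
  congr 1
  simp only [leadingPart, Finset.mul_sum, ← Finset.sum_add_distrib]
  exact Finset.sum_congr rfl fun α _ => by ring

lemma IsAlmostEigen.exists_abs_radialDeriv_le (hf : D.IsThetaBounded A f) {p : ℕ}
    (hp : D.IsAlmostEigen p f) :
    ∃ C : ℝ, 0 ≤ C ∧ ∀ m : ℝ, 1 ≤ m → ∀ z, D.Separated m z → D.posCount z = p + 1 →
      |(p + 1) * D.radialOp f z - D.leadingPart (fun y => f y + D.radialOp f y) z| ≤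
        C * (p / m + 1 / m ^ 2) * D.theta 1 z := by
  obtain ⟨C₀, hC₀, hlead⟩ := hf.exists_abs_radialOp_sub_leadingPart_le
  obtain ⟨C, hC, hp⟩ := hp
  have hK := D.sum_k_nonneg
  set K := ∑ α ∈ D.Rpos, D.k α
  refine ⟨(p + 1) * C₀ + K * (2 * C), by positivity, fun m hm z hsep hz => ?_⟩
  have hm0 : 0 < m := by linarith
  have hdesc : |D.leadingPart (fun y => D.radialOp f y - p * f y) z| ≤
      K * (2 * (C * (p / m + 1 / m ^ 2)) * D.theta 1 z) :=
    abs_leadingPart_le (by positivity) fun α hα => by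
      obtain ⟨hαpos, -, hcount⟩ := mem_descents.1 hα
      exact hp m hm _ (hsep.rRefl (D.pos_subset hαpos)) (by omega)
  rw [posCount_mul_radialOp_sub_leadingPart]
  refine (abs_sub _ _).trans ?_
  rw [abs_mul, abs_of_pos (by positivity : (0 : ℝ) < p + 1)]
  calc (p + 1) * |D.radialOp f z - D.leadingPart f z| +
        |D.leadingPart (fun y => D.radialOp f y - p * f y) z|
      ≤ (p + 1) * (C₀ * (p / m + 1 / m ^ 2) * D.theta 1 z) +
          K * (2 * (C * (p / m + 1 / m ^ 2)) * D.theta 1 z) := by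
        gcongr
        exact hlead m z p hm0 hsep hz.le
    _ = ((p + 1) * C₀ + K * (2 * C)) * (p / m + 1 / m ^ 2) * D.theta 1 z := by ring

lemma IsThetaBounded.mul_sub_leadingPart (hf : D.IsThetaBounded A f) {c : ℝ} (hc : 0 ≤ c) :
    D.IsThetaBounded (c * A + (∑ α ∈ D.Rpos, D.k α) * (2 * A))
      fun z => c * f z - D.leadingPart f z := by
  obtain ⟨hA, hf⟩ := hf
  have hK := D.sum_k_nonneg
  refine ⟨by positivity, fun z hz => ?_⟩
  have hlead : |D.leadingPart f z| ≤ (∑ α ∈ D.Rpos, D.k α) * (2 * A * D.theta 1 z) :=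
    abs_leadingPart_le hA fun α hα =>
      hf _ (D.regular_rRefl (D.pos_subset (descents_subset z hα)) hz)
  calc |c * f z - D.leadingPart f z| ≤ c * |f z| + |D.leadingPart f z| := by
        simpa only [abs_mul, abs_of_nonneg hc] using abs_sub (c * f z) (D.leadingPart f z)
    _ ≤ c * (A * D.theta 1 z) + (∑ α ∈ D.Rpos, D.k α) * (2 * A * D.theta 1 z) := by
        gcongr
        exact hf z hz
    _ = (c * A + (∑ α ∈ D.Rpos, D.k α) * (2 * A)) * D.theta 1 z := by ring

lemma IsAlmostEigen.succ (hf : D.IsThetaBounded A f) (hsol : D.IsRadialSolution f) {p : ℕ}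
    (hp : D.IsAlmostEigen p f) : D.IsAlmostEigen (p + 1) f := by
  obtain ⟨C₀, hC₀, hlead⟩ := hf.exists_abs_radialOp_sub_leadingPart_le
  obtain ⟨C₁, hC₁, hderiv⟩ := hp.exists_abs_radialDeriv_le hf
  have hbdd := hf.mul_sub_leadingPart (by positivity : (0 : ℝ) ≤ p + 1)
  set C₂ := (p + 1) * A + (∑ α ∈ D.Rpos, D.k α) * (2 * A)
  have hC₂ := hbdd.1
  refine ⟨C₀ + 2 ^ (Rpos0 D).card * (C₂ + C₁), by positivity, fun m hm z hsep hz => ?_⟩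
  have hm0 : 0 < m := by linarith
  have hθ := D.theta_pos zero_le_one z
  have hd (y : V) (hy : HORegular D y) :
      HasRadialDerivAt (fun y => (p + 1) * f y - D.leadingPart f y)
        ((p + 1) * D.radialOp f y - D.leadingPart (fun y => f y + D.radialOp f y) y) y :=
    (HasDerivAt.const_mul (p + 1 : ℝ) (hsol y hy)).sub (hasRadialDerivAt_leadingPart hsol hy)
  have hint : |(p + 1) * f z - D.leadingPart f z| ≤
      2 ^ (Rpos0 D).card * (C₂ + C₁) * ((p + 1) / m) * D.theta 1 z :=
    abs_le_of_abs_radialDeriv_le hC₁ hd hbdd hderiv hm hsep hz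
  push_cast
  calc |D.radialOp f z - (p + 1) * f z|
      ≤ |D.radialOp f z - D.leadingPart f z| + |(p + 1) * f z - D.leadingPart f z| := by
        rw [← abs_neg ((p + 1) * f z - _), neg_sub]
        simpa using abs_add_le (D.radialOp f z - D.leadingPart f z)
          (D.leadingPart f z - (p + 1) * f z)
    _ ≤ C₀ * (p / m + 1 / m ^ 2) * D.theta 1 z +
          2 ^ (Rpos0 D).card * (C₂ + C₁) * ((p + 1) / m) * D.theta 1 z :=
        add_le_add (hlead m z p hm0 hsep hz.le) hint
    _ ≤ C₀ * ((p + 1) / m + 1 / m ^ 2) * D.theta 1 z +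
          2 ^ (Rpos0 D).card * (C₂ + C₁) * ((p + 1) / m + 1 / m ^ 2) * D.theta 1 z := by
        gcongr
        · linarith
        · exact le_add_of_nonneg_right (by positivity)
    _ = (C₀ + 2 ^ (Rpos0 D).card * (C₂ + C₁)) * ((p + 1) / m + 1 / m ^ 2) * D.theta 1 z := by
        ring

lemma IsThetaBounded.isAlmostEigen (hf : D.IsThetaBounded A f) (hsol : D.IsRadialSolution f)
    (n : ℕ) : D.IsAlmostEigen n f := by
  induction n with
  | zero => exact hf.isAlmostEigen_zero
  | succ p ih => exact ih.succ hf hsol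

end HOData

/-! ### The symmetrized function on the positive chamber -/

lemma div_add_div_sq_mul_one_add_le {n m : ℝ} (hn : 0 ≤ n) (hm : 1 ≤ m) :
    (n / m + 1 / m ^ 2) * (1 + m) ≤ 2 * (n + 1) := by
  have hm0 : 0 < m := by linarith
  calc (n / m + 1 / m ^ 2) * (1 + m) = (1 + m) / m * (n + 1 / m) := by field_simp
    _ ≤ 2 * (n + 1) := by
      gcongr
      · rw [div_le_iff₀ hm0]
        linarith
      · exact (div_le_one hm0).2 hm

namespace HOData

variable (D : HOData V)

/-- The Weyl-invariant product `∏ (1 + |(β, z)|)` over the positive indivisible roots, which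
coincides with `θ₁` on the positive chamber. -/
def absTheta (z : V) : ℝ := ∏ β ∈ Rpos0 D, (1 + |⟪β, z⟫|)

variable {D}
variable {m : ℝ} {x z : V}

lemma absTheta_weyl (w : weylGroup D) (z : V) : D.absTheta (w.1 z) = D.absTheta z := by
  refine D.weylGroup_invariant (fun α hα z => ?_) w z
  rw [absTheta, absTheta, ← prod_foldRefl hα]
  refine Finset.prod_congr rfl fun β _ => ?_
  rw [inner_foldRefl_rRefl, flipVal]
  split_ifs
  · rfl
  · rw [abs_neg]

lemma theta_le_absTheta (z : V) : D.theta 1 z ≤ D.absTheta z :=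
  Finset.prod_le_prod (fun β _ => by positivity) fun β _ => by
    rw [one_mul]
    gcongr
    exact max_le (le_abs_self _) (abs_nonneg _)

lemma theta_mul_le_absTheta (hsep : D.Separated m z) (h : D.posCount z ≠ (Rpos0 D).card) :
    D.theta 1 z * (1 + m) ≤ D.absTheta z := by
  obtain ⟨β, hβ, hβz⟩ : ∃ β ∈ Rpos0 D, ⟪β, z⟫ ≤ 0 := by
    by_contra! hpos
    exact h (by rw [posCount, Finset.filter_true_of_mem hpos])
  rw [theta, absTheta, ← Finset.mul_prod_erase _ _ hβ,
    ← Finset.mul_prod_erase _ (fun β => 1 + |⟪β, z⟫|) hβ, max_eq_right hβz, mul_zero, add_zero,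
    one_mul, mul_comm]
  gcongr with δ
  · exact hsep β (D.pos_subset (D.pos_of_mem_Rpos0 hβ))
  · rw [one_mul]
    exact max_le (le_abs_self _) (abs_nonneg _)

lemma theta_eq_absTheta (hx : x ∈ posChamber D) : D.theta 1 x = D.absTheta x :=
  Finset.prod_congr rfl fun β hβ => by
    have hpos := hx β (D.pos_of_mem_Rpos0 hβ)
    rw [one_mul, max_eq_left hpos.le, abs_of_pos hpos]

lemma one_le_theta (z : V) : 1 ≤ D.theta 1 z :=
  Finset.one_le_prod fun β _ => by linarith [le_max_right ⟪β, z⟫ 0]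

lemma separated_of_forall_pos (h : ∀ α ∈ D.Rpos, m ≤ |⟪α, z⟫|) : D.Separated m z :=
  fun γ hγ => (D.pos_or_neg γ hγ).elim (h γ) fun hneg => by
    simpa only [inner_neg_left, abs_neg] using h (-γ) hneg

lemma separated_weyl (w : weylGroup D) (hz : D.Separated m z) : D.Separated m (w.1 z) := by
  rwa [D.weylGroup_invariant (P := D.Separated m) fun α hα y => propext
    ⟨fun hy => by simpa only [rRefl_rRefl] using hy.rRefl hα, fun hy => hy.rRefl hα⟩]

lemma regular_of_posChamber (hx : x ∈ posChamber D) : HORegular D x := fun γ hγ =>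
  (D.pos_or_neg γ hγ).elim (fun hpos => (hx γ hpos).ne') fun hneg h => by
    simpa only [inner_neg_left, h, neg_zero, lt_irrefl] using hx (-γ) hneg

lemma IsThetaBounded.exists_abs_radialOp_sub_mul_le {f : V → ℝ} {A : ℝ}
    (hf : D.IsThetaBounded A f) (n : ℕ) :
    ∃ C : ℝ, 0 ≤ C ∧ ∀ z, HORegular D z → |D.radialOp f z - n * f z| ≤ C * D.theta 1 z := by
  obtain ⟨C, hC, hL⟩ := hf.exists_abs_radialOp_le
  obtain ⟨hA, hf⟩ := hf
  refine ⟨C + n * A, by positivity, fun z hz => (abs_sub _ _).trans ?_⟩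
  rw [abs_mul, Nat.abs_cast, add_mul, mul_assoc]
  exact add_le_add (hL z hz) (mul_le_mul_of_nonneg_left (hf z hz) n.cast_nonneg)

lemma IsThetaBounded.exists_abs_radialOp_sub_card_mul_le {f : V → ℝ} {A : ℝ}
    (hf : D.IsThetaBounded A f) (hsol : D.IsRadialSolution f) :
    ∃ C : ℝ, 0 ≤ C ∧ ∀ m : ℝ, 0 ≤ m → ∀ z, HORegular D z → D.Separated m z →
      |D.radialOp f z - (Rpos0 D).card * f z| * (1 + m) ≤ C * D.absTheta z := by
  set N := (Rpos0 D).card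
  obtain ⟨C₁, hC₁, hcrude⟩ := hf.exists_abs_radialOp_sub_mul_le N
  obtain ⟨C₂, hC₂, heigen⟩ := hf.isAlmostEigen hsol N
  refine ⟨2 * C₁ + C₂ * (2 * (N + 1)), by positivity, fun m hm z hz hsep => ?_⟩
  have hθ := D.theta_pos zero_le_one z
  have hθabs := D.theta_le_absTheta z
  have hT : 0 < D.absTheta z := hθ.trans_le hθabs
  have hslack : 0 ≤ C₁ * D.absTheta z := by positivity
  have hslack' : 0 ≤ C₂ * (2 * (N + 1)) * D.absTheta z := by positivity
  have hgain (h : D.theta 1 z * (1 + m) ≤ 2 * D.absTheta z) :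
      |D.radialOp f z - N * f z| * (1 + m) ≤
        (2 * C₁ + C₂ * (2 * (N + 1))) * D.absTheta z :=
    calc |D.radialOp f z - N * f z| * (1 + m) ≤ C₁ * D.theta 1 z * (1 + m) :=
          mul_le_mul_of_nonneg_right (hcrude z hz) (by positivity)
      _ = C₁ * (D.theta 1 z * (1 + m)) := by ring
      _ ≤ C₁ * (2 * D.absTheta z) := by gcongr
      _ ≤ (2 * C₁ + C₂ * (2 * (N + 1))) * D.absTheta z := by linarith
  rcases lt_or_ge m 1 with hm1 | hm1
  · exact hgain (by nlinarith)
  by_cases hcount : D.posCount z = N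
  · calc |D.radialOp f z - N * f z| * (1 + m)
        ≤ C₂ * (N / m + 1 / m ^ 2) * D.theta 1 z * (1 + m) :=
          mul_le_mul_of_nonneg_right (heigen m hm1 z hsep hcount) (by positivity)
      _ = (N / m + 1 / m ^ 2) * (1 + m) * (C₂ * D.theta 1 z) := by ring
      _ ≤ 2 * (N + 1) * (C₂ * D.absTheta z) :=
          mul_le_mul (div_add_div_sq_mul_one_add_le N.cast_nonneg hm1) (by gcongr)
            (by positivity) (by positivity)
      _ ≤ (2 * C₁ + C₂ * (2 * (N + 1))) * D.absTheta z := by linarith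
  · exact hgain (by linarith [theta_mul_le_absTheta hsep hcount])

lemma absRho_weyl (w : weylGroup D) (z : V) : D.absRho (w.1 z) = D.absRho z :=
  D.weylGroup_invariant (fun _ hα z => D.absRho_rRefl hα z) w z

lemma absRho_of_posChamber (hx : x ∈ posChamber D) : D.absRho x = ⟪rhoHO D, x⟫ := by
  rw [D.absRho_eq, D.inner_rhoHO]
  exact Finset.sum_congr rfl fun α hα => by rw [abs_of_pos (hx α hα)]

lemma inner_nonneg_of_mem_closure {α : V} (hα : α ∈ D.Rpos)
    (hx : x ∈ closure (posChamber D)) : 0 ≤ ⟪α, x⟫ :=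
  le_on_closure (fun _ hy => (hy α hα).le) continuousOn_const
    (g := fun y => ⟪α, y⟫) (by fun_prop) hx

variable {G : V → ℝ}

lemma isRadialSolution_rescaled (hG : IsOpdamR D 0 G) : D.IsRadialSolution (D.rescaled G) :=
  fun _ hz => D.hasRadialDerivAt_rescaled hG hz

lemma exists_isThetaBounded_rescaled [Finite (weylGroup D)] (hG : IsOpdamR D 0 G) :
    ∃ A, D.IsThetaBounded A (D.rescaled G) := by
  obtain ⟨A, hA, hup⟩ := D.exists_rescaled_le hG
  obtain ⟨a, ha, hlow⟩ := D.exists_le_rescaled hG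
  refine ⟨A, hA.le, fun z hz => ?_⟩
  rw [abs_of_nonneg ((mul_pos ha (D.theta_pos zero_le_one z)).le.trans (hlow z hz))]
  exact hup z hz

lemma contDiff_of_isOpdamR {lam : V} (hG : IsOpdamR D lam G) : ContDiff ℝ 1 G :=
  contDiffOn_univ.1 (hG.1.contDiffOn uniqueDiffOn_univ)

variable [Fintype (weylGroup D)]

lemma contDiff_Fsym (hG : ContDiff ℝ 1 G) : ContDiff ℝ 1 (Fsym D G) :=
  contDiff_const.mul
    (ContDiff.sum fun w _ => hG.comp w.1.toContinuousLinearEquiv.contDiff)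

lemma fderiv_Fsym (hG : Differentiable ℝ G) (x v : V) : fderiv ℝ (Fsym D G) x v =
    (Fintype.card (weylGroup D) : ℝ)⁻¹ * ∑ w : weylGroup D, fderiv ℝ G (w.1 x) (w.1 v) := by
  have hterm (w : weylGroup D) : HasFDerivAt (fun y => G (w.1 y))
      ((fderiv ℝ G (w.1 x)).comp (w.1.toContinuousLinearEquiv : V →L[ℝ] V)) x :=
    (hG (w.1 x)).hasFDerivAt.comp x w.1.toContinuousLinearEquiv.hasFDerivAt
  have hsum := (HasFDerivAt.fun_sum fun w (_ : w ∈ Finset.univ) => hterm w).const_mul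
    (Fintype.card (weylGroup D) : ℝ)⁻¹
  rw [show fderiv ℝ (Fsym D G) x = _ from hsum.fderiv]
  simp

lemma sum_rescaled_weyl (x : V) : ∑ w : weylGroup D, D.rescaled G (w.1 x) =
    Fintype.card (weylGroup D) * (Real.exp (D.absRho x) * Fsym D G x) := by
  simp only [rescaled, absRho_weyl, ← Finset.mul_sum, Fsym]
  field_simp

lemma sum_radialOp_weyl (hG : IsOpdamR D 0 G) (hx : x ∈ posChamber D) :
    ∑ w : weylGroup D, D.radialOp (D.rescaled G) (w.1 x) = Fintype.card (weylGroup D) *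
      (Real.exp (D.absRho x) * (⟪rhoHO D, x⟫ * Fsym D G x + fderiv ℝ (Fsym D G) x x)) := by
  have hdiff := (contDiff_of_isOpdamR hG).differentiable one_ne_zero
  simp only [D.radialOp_rescaled hG (D.regular_weyl _ (regular_of_posChamber hx)), absRho_weyl,
    mul_add, ← mul_assoc, Finset.sum_add_distrib, ← Finset.mul_sum, fderiv_Fsym hdiff, Fsym,
    absRho_of_posChamber hx]
  field_simp

lemma rescaled_le_sum_weyl {c : ℝ} (hc : 0 ≤ c)
    (hlow : ∀ z, HORegular D z → c * D.theta 1 z ≤ D.rescaled G z) (hx : x ∈ posChamber D) :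
    c * D.theta 1 x ≤ ∑ w : weylGroup D, D.rescaled G (w.1 x) := by
  have hxr := regular_of_posChamber hx
  refine (hlow x hxr).trans (Finset.single_le_sum (f := fun w : weylGroup D =>
    D.rescaled G (w.1 x)) (fun w _ => ?_) (Finset.mem_univ 1))
  exact (mul_nonneg hc (D.theta_pos zero_le_one _).le).trans (hlow _ (D.regular_weyl w hxr))

lemma Fsym_pos_of_mem_closure (hG : IsOpdamR D 0 G) (hx : x ∈ closure (posChamber D)) :
    0 < Fsym D G x := by
  obtain ⟨c, hc, hlow⟩ := D.exists_le_rescaled hG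
  have hcont : Continuous (Fsym D G) :=
    (contDiff_Fsym (contDiff_of_isOpdamR hG)).continuous
  have hle : c ≤ Fintype.card (weylGroup D) * (Real.exp (D.absRho x) * Fsym D G x) := by
    refine le_on_closure (fun y hy => ?_) continuousOn_const (g := fun y =>
      Fintype.card (weylGroup D) * (Real.exp (D.absRho y) * Fsym D G y)) ?_ hx
    · rw [← sum_rescaled_weyl]
      exact (le_mul_of_one_le_right hc.le (one_le_theta y)).trans
        (rescaled_le_sum_weyl hc.le hlow hy)
    · have := D.continuous_absRho
      fun_prop
  have hpos := hc.trans_le hle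
  exact pos_of_mul_pos_right (pos_of_mul_pos_right hpos (Nat.cast_nonneg _)) (Real.exp_pos _).le

lemma add_fderiv_Fsym_div_sub_eq (hG : IsOpdamR D 0 G) (hx : x ∈ posChamber D) (n : ℝ) :
    ⟪rhoHO D, x⟫ + fderiv ℝ (Fsym D G) x x / Fsym D G x - n =
      (∑ w : weylGroup D, (D.radialOp (D.rescaled G) (w.1 x) - n * D.rescaled G (w.1 x))) /
        ∑ w : weylGroup D, D.rescaled G (w.1 x) := by
  have hF := Fsym_pos_of_mem_closure hG (subset_closure hx)
  rw [Finset.sum_sub_distrib, ← Finset.mul_sum, sum_rescaled_weyl, sum_radialOp_weyl hG hx]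
  field_simp

lemma exists_abs_sub_card_le_on_posChamber (hG : IsOpdamR D 0 G) :
    ∃ C : ℝ, 0 < C ∧ ∀ x ∈ posChamber D, ∀ m : ℝ, 0 ≤ m → D.Separated m x →
      |⟪rhoHO D, x⟫ + fderiv ℝ (Fsym D G) x x / Fsym D G x - (Rpos0 D).card| ≤
        C / (1 + m) := by
  obtain ⟨a, ha, hlow⟩ := D.exists_le_rescaled hG
  obtain ⟨A, hA⟩ := exists_isThetaBounded_rescaled hG
  obtain ⟨C, hC, hterm⟩ :=
    hA.exists_abs_radialOp_sub_card_mul_le (isRadialSolution_rescaled hG)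
  refine ⟨Fintype.card (weylGroup D) * (C + 1) / a, by positivity, fun x hx m hm hsep => ?_⟩
  have hθ := D.theta_pos zero_le_one x
  have hlower := rescaled_le_sum_weyl ha.le hlow hx
  have hS0 : 0 < ∑ w : weylGroup D, D.rescaled G (w.1 x) := (mul_pos ha hθ).trans_le hlower
  rw [add_fderiv_Fsym_div_sub_eq hG hx, abs_div, abs_of_pos hS0,
    div_le_div_iff₀ hS0 (by positivity)]
  calc |∑ w : weylGroup D, (D.radialOp (D.rescaled G) (w.1 x) -
        (Rpos0 D).card * D.rescaled G (w.1 x))| * (1 + m)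
      ≤ (∑ w : weylGroup D, |D.radialOp (D.rescaled G) (w.1 x) -
        (Rpos0 D).card * D.rescaled G (w.1 x)|) * (1 + m) := by
        gcongr
        exact Finset.abs_sum_le_sum_abs _ _
    _ ≤ ∑ w : weylGroup D, C * D.absTheta (w.1 x) := by
        rw [Finset.sum_mul]
        exact Finset.sum_le_sum fun w _ => hterm m hm _
          (D.regular_weyl w (regular_of_posChamber hx)) (separated_weyl w hsep)
    _ = Fintype.card (weylGroup D) * C / a * (a * D.theta 1 x) := by
        simp only [absTheta_weyl, theta_eq_absTheta hx, Finset.sum_const, Finset.card_univ,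
          nsmul_eq_mul]
        field_simp
    _ ≤ Fintype.card (weylGroup D) * (C + 1) / a * ∑ w : weylGroup D, D.rescaled G (w.1 x) := by
        gcongr
        exact le_add_of_nonneg_right zero_le_one

lemma continuousOn_add_fderiv_Fsym_div (hG : IsOpdamR D 0 G) :
    ContinuousOn (fun x => ⟪rhoHO D, x⟫ + fderiv ℝ (Fsym D G) x x / Fsym D G x)
      (closure (posChamber D)) := by
  have hsmooth : ContDiff ℝ 1 (Fsym D G) :=
    contDiff_Fsym (contDiff_of_isOpdamR hG)
  have hderiv : Continuous fun x => fderiv ℝ (Fsym D G) x x :=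
    (hsmooth.continuous_fderiv one_ne_zero).clm_apply continuous_id
  have hrho : Continuous fun x => ⟪rhoHO D, x⟫ := by fun_prop
  exact hrho.continuousOn.add (hderiv.continuousOn.div hsmooth.continuous.continuousOn
    fun x hx => (Fsym_pos_of_mem_closure hG hx).ne')

end HOData

theorem statement9_general (D : HOData V) [Fintype (weylGroup D)] (hne : D.Rpos.Nonempty)
    {G : V → ℝ} (hG : IsOpdamR D 0 G) :
    ∃ C : ℝ, 0 < C ∧ ∀ x ∈ closure (posChamber D),
      |⟪rhoHO D, x⟫ + fderiv ℝ (Fsym D G) x x / Fsym D G x - (Rpos0 D).card| ≤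
        C / (1 + D.Rpos.inf' hne (fun α => ⟪α, x⟫)) := by
  obtain ⟨C, hC, hchamber⟩ := HOData.exists_abs_sub_card_le_on_posChamber hG
  refine ⟨C, hC, fun x hx => le_on_closure (fun y hy => ?_)
    ((HOData.continuousOn_add_fderiv_Fsym_div hG).sub continuousOn_const).abs
    (continuousOn_const.div (g := fun y => 1 + D.Rpos.inf' hne fun α => ⟪α, y⟫) ?_ ?_) hx⟩
  · refine hchamber y hy _ (Finset.le_inf' hne _ fun α hα => (hy α hα).le)
      (HOData.separated_of_forall_pos fun α hα => ?_)
    exact (Finset.inf'_le _ hα).trans (le_abs_self _)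
  · have hinf : Continuous fun y => D.Rpos.inf' hne fun α => ⟪α, y⟫ :=
      Continuous.finset_inf'_apply hne fun α _ => by fun_prop
    exact (continuous_const.add hinf).continuousOn
  · intro y hy
    have hinf : 0 ≤ D.Rpos.inf' hne fun α => ⟪α, y⟫ :=
      Finset.le_inf' hne _ fun α hα => HOData.inner_nonneg_of_mem_closure hα hy
    positivity

/-- there is `C > 0` with
`|(ρ,x) + (x,∇F₀(x))/F₀(x) - |R₀⁺|| ≤ C / (1 + min_{α ∈ R⁺} (α,x))` on `ā₊`. -/
theorem statement9 (D : HOData E) [Fintype (weylGroup D)] (hne : D.Rpos.Nonempty)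
    (Gzero : E → ℝ) (hG0 : IsOpdamR D 0 Gzero) :
    ∃ C : ℝ, 0 < C ∧ ∀ x ∈ closure (posChamber D),
      |⟪rhoHO D, x⟫ + ⟪x, gradient (Fsym D Gzero) x⟫ / Fsym D Gzero x
          - ((Rpos0 D).card : ℝ)|
        ≤ C / (1 + D.Rpos.inf' hne (fun α => ⟪α, x⟫)) := by
  simpa only [real_inner_comm (gradient _ _), inner_gradient_left]
    using statement9_general D hne hG0
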